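/- arXiv:math/0701391 — 3 statements merged into one kernel-verified Lean document; each statement's English description precedes it below -/
import Mathlib

section
/- For all real parameters (x₁, y₁, α, x₂, y₂, β), the area μ(x₁,y₁,α,x₂,y₂,β) of the convex hull of the configuration X(x₁,y₁,α,x₂,y₂,β) is at least 0.227498. -/
open Real MeasureTheory

noncomputable def pt (x y : ℝ) : EuclideanSpace ℝ (Fin 2) :=
  (WithLp.equiv 2 (Fin 2 → ℝ)).symm ![x, y]

noncomputable def sqVertex (x y a : ℝ) (k : Fin 4) : EuclideanSpace ℝ (Fin 2) :=
  pt (x + Real.sqrt 2 / 6 * Real.cos (a + ((k : ℕ) : ℝ) * (Real.pi / 2)))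
     (y + Real.sqrt 2 / 6 * Real.sin (a + ((k : ℕ) : ℝ) * (Real.pi / 2)))

noncomputable def triVertex (x y b : ℝ) (k : Fin 3) : EuclideanSpace ℝ (Fin 2) :=
  pt (x + Real.sqrt 3 / 6 * Real.cos (b + ((k : ℕ) : ℝ) * (2 * Real.pi / 3)))
     (y + Real.sqrt 3 / 6 * Real.sin (b + ((k : ℕ) : ℝ) * (2 * Real.pi / 3)))

noncomputable def config (x1 y1 a x2 y2 b : ℝ) : Set (EuclideanSpace ℝ (Fin 2)) :=
  {pt 0 0, pt 1 0} ∪ Set.range (sqVertex x1 y1 a) ∪ Set.range (triVertex x2 y2 b)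

noncomputable def area (x1 y1 a x2 y2 b : ℝ) : ℝ :=
  (volume (convexHull ℝ (config x1 y1 a x2 y2 b))).toReal

/-!
If a convex set `K` of the plane contains a translate of the zonotope `Z = ∑ i, [0, v i]`, then
`∑ i, |det (v i, q i - p i)| ≤ 2 * area K` for all points `p i`, `q i` of `K`. To see this, cut `K`
along the line through `p` and `q` and push one half by `v`: the gap swept inside `K + [0, v]`
contains the parallelogram spanned by `q - p` and `v`. Hence
`area K + ε * ∑ i, |det (v i, q i - p i)| ≤ area (K + ε Z) ≤ (1 + ε) ^ 2 * area K`, the last step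
because `K + ε Z` lies in a translate of `(1 + ε) K`; now let `ε → 0`.

For the configuration, suppose that the hull has area `A < 0.227498`, and let `φ` and `θ` be
directions of a side of the square and of a side of the triangle, measured from `EF` and chosen with
`|φ| ≤ π / 4`, `|θ| ≤ π / 6`. The square against `EF` gives `|cos φ| + |sin φ| ≤ 6 A`, so that `φ`
is small. The segment `EF` against the sides of the triangle gives `sin (π / 3 + |θ|) ≤ 4 A`, so
that `θ` is small. The square against both `EF` and a side of the triangle gives
`|cos φ| + |sin (π / 3 + φ - θ)| / 2 ≤ 6 A`, where `φ ≥ 0` after a reflection, and this fails for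
such small `φ` and `θ`.
-/

open Module Set
open scoped Pointwise EuclideanSpace

theorem measure_add_measure_inter_preimage_Ico_le {E : Type*} [AddCommGroup E]
    [MeasurableSpace E] (μ : Measure E) [μ.IsAddLeftInvariant] {f : E →+ ℝ}
    (hf : Measurable f) {S : Set E} (h0 : 0 ∈ S) {v : E} (hv : v ∈ S) (hfv : 0 ≤ f v)
    (K : Set E) (c : ℝ) :
    μ K + μ ((K + S) ∩ f ⁻¹' Ico c (c + f v)) ≤ μ (K + S) := by
  set A : Set E := f ⁻¹' Iio c
  set B : Set E := f ⁻¹' Iio (c + f v)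
  have hA : MeasurableSet A := hf measurableSet_Iio
  have hB : MeasurableSet B := hf measurableSet_Iio
  have hAB : A ⊆ B := preimage_mono (Iio_subset_Iio (le_add_of_nonneg_right hfv))
  have hslab : f ⁻¹' Ico c (c + f v) = B \ A := by
    ext z
    simp only [A, B, mem_preimage, mem_Ico, Set.mem_sdiff, mem_Iio, not_lt, and_comm]
  have hbelow : μ (K ∩ A) ≤ μ ((K + S) ∩ A) :=
    measure_mono (inter_subset_inter_left A (subset_add_left K h0))
  have habove : μ (K \ A) ≤ μ ((K + S) \ B) := by
    rw [← measure_vadd μ v (K \ A)]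
    refine measure_mono ?_
    rintro _ ⟨z, ⟨hzK, hzA⟩, rfl⟩
    refine ⟨by simpa only [vadd_eq_add, add_comm] using add_mem_add hzK hv, fun hzB ↦ hzA ?_⟩
    simpa only [A, B, vadd_eq_add, mem_preimage, mem_Iio, map_add, add_comm c,
      add_lt_add_iff_left] using hzB
  calc μ K + μ ((K + S) ∩ f ⁻¹' Ico c (c + f v))
      = μ (K ∩ A) + μ ((K + S) ∩ (B \ A)) + μ (K \ A) := by
        rw [← measure_inter_add_sdiff K hA, hslab]; abel
    _ ≤ μ ((K + S) ∩ A) + μ ((K + S) ∩ (B \ A)) + μ ((K + S) \ B) := by gcongr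
    _ = μ (K + S) := by
        rw [← measure_inter_add_sdiff (K + S) hB, ← measure_inter_add_sdiff ((K + S) ∩ B) hA,
          inter_assoc, inter_eq_self_of_subset_right hAB, inter_sdiff_assoc]

theorem vadd_parallelepiped_subset_add_segment {E : Type*} [AddCommGroup E] [Module ℝ E]
    {K : Set E} (hK : Convex ℝ K) {p q : E} (hp : p ∈ K) (hq : q ∈ K) {v : E} {f : E →ₗ[ℝ] ℝ}
    (hpq : f (q - p) = 0) (hv : 0 ≤ f v) :
    p +ᵥ parallelepiped ![q - p, v] ⊆
      (K + segment ℝ 0 v) ∩ f ⁻¹' Icc (f p) (f p + f v) := by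
  rintro _ ⟨_, ⟨t, ⟨ht0, ht1⟩, rfl⟩, rfl⟩
  have hz : p +ᵥ ∑ i, t i • ![q - p, v] i = p + t 0 • (q - p) + t 1 • v := by
    rw [vadd_eq_add, Fin.sum_univ_two, ← add_assoc, Matrix.cons_val_zero, Matrix.cons_val_one,
      Matrix.cons_val_fin_one]
  have hfz : f (p + t 0 • (q - p) + t 1 • v) = f p + t 1 * f v := by
    simp only [map_add, map_smul, hpq, smul_eq_mul, mul_zero, add_zero]
  simp only [hz]
  refine ⟨add_mem_add (hK.add_smul_sub_mem hp hq ⟨ht0 0, ht1 0⟩) ?_, ?_, ?_⟩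
  · rw [segment_eq_image]
    exact ⟨t 1, ⟨ht0 1, ht1 1⟩, by simp only [smul_zero, zero_add]⟩
  · rw [hfz]
    exact le_add_of_nonneg_right (mul_nonneg (ht0 1) hv)
  · rw [hfz]
    exact add_le_add_right (mul_le_of_le_one_left hv (ht1 1)) _

theorem addHaar_preimage_singleton {E : Type*} [NormedAddCommGroup E] [NormedSpace ℝ E]
    [MeasurableSpace E] [BorelSpace E] [FiniteDimensional ℝ E] (μ : Measure E)
    [μ.IsAddHaarMeasure] {f : E →ₗ[ℝ] ℝ} (hf : f ≠ 0) (r : ℝ) : μ (f ⁻¹' {r}) = 0 := by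
  rcases (f ⁻¹' {r}).eq_empty_or_nonempty with hempty | ⟨z, hz⟩
  · rw [hempty, measure_empty]
  · have hker : f ⁻¹' {r} = (-z + ·) ⁻¹' (LinearMap.ker f : Set E) := by
      ext w
      simp only [← mem_singleton_iff.1 hz, mem_preimage, mem_singleton_iff, SetLike.mem_coe,
        LinearMap.mem_ker, map_add, map_neg, neg_add_eq_zero, eq_comm (a := f w)]
    rw [hker, measure_preimage_add]
    exact Measure.addHaar_submodule μ _ (mt LinearMap.ker_eq_top.1 hf)

theorem addHaar_add_smul_le {E : Type*} [NormedAddCommGroup E] [NormedSpace ℝ E]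
    [MeasurableSpace E] [BorelSpace E] [FiniteDimensional ℝ E] (μ : Measure E)
    [μ.IsAddHaarMeasure] {K L : Set E} (hK : Convex ℝ K) {x : E} (hL : x +ᵥ L ⊆ K) {ε : ℝ}
    (hε : 0 ≤ ε) : μ (K + ε • L) ≤ ENNReal.ofReal ((1 + ε) ^ finrank ℝ E) * μ K := by
  have hsub : ε • x +ᵥ (K + ε • L) ⊆ (1 + ε) • K := by
    rw [hK.add_smul zero_le_one hε, one_smul]
    rintro _ ⟨_, ⟨y, hy, _, ⟨z, hz, rfl⟩, rfl⟩, rfl⟩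
    refine ⟨y, hy, ε • (x + z), smul_mem_smul_set (hL (vadd_mem_vadd_set hz)), ?_⟩
    simp only [vadd_eq_add, smul_add]
    abel
  calc μ (K + ε • L) = μ (ε • x +ᵥ (K + ε • L)) := (measure_vadd μ _ _).symm
    _ ≤ μ ((1 + ε) • K) := measure_mono hsub
    _ = _ := by rw [Measure.addHaar_smul, abs_of_nonneg (by positivity)]

section AreaForm

attribute [local instance] FiniteDimensional.of_fact_finrank_eq_two

variable {E : Type*} [NormedAddCommGroup E] [InnerProductSpace ℝ E] [Fact (finrank ℝ E = 2)]
  [MeasurableSpace E] [BorelSpace E] (o : Orientation ℝ E (Fin 2))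

theorem volume_parallelepiped_eq_abs_areaForm (u v : E) :
    volume (parallelepiped ![u, v]) = ENNReal.ofReal |o.areaForm u v| := by
  rw [← o.measure_eq_volume, AlternatingMap.measure_parallelepiped, o.areaForm_to_volumeForm]

theorem volume_add_abs_areaForm_le {K : Set E} (hK : Convex ℝ K) (v : E) {p q : E} (hp : p ∈ K)
    (hq : q ∈ K) :
    volume K + ENNReal.ofReal |o.areaForm v (q - p)| ≤ volume (K + segment ℝ 0 v) := by
  wlog hpos : 0 < o.areaForm (q - p) v generalizing p q
  · rcases (not_lt.1 hpos).eq_or_lt with hzero | hneg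
    · rw [o.areaForm_swap, hzero, neg_zero, abs_zero, ENNReal.ofReal_zero, add_zero]
      exact measure_mono (subset_add_left K (left_mem_segment ℝ 0 v))
    · have hpos' : 0 < o.areaForm (p - q) v := by
        rwa [← neg_sub, map_neg, LinearMap.neg_apply, neg_pos]
      rw [← neg_sub, map_neg, abs_neg]
      exact this hq hp hpos'
  set f : E →ₗ[ℝ] ℝ := o.areaForm (q - p)
  have hf : f ≠ 0 := fun h ↦ hpos.ne' (by rw [h, LinearMap.zero_apply])
  have hslab : ENNReal.ofReal |o.areaForm v (q - p)| ≤
      volume ((K + segment ℝ 0 v) ∩ f ⁻¹' Ico (f p) (f p + f v)) := by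
    calc ENNReal.ofReal |o.areaForm v (q - p)|
        = volume (p +ᵥ parallelepiped ![q - p, v]) := by
          rw [measure_vadd, volume_parallelepiped_eq_abs_areaForm o, o.areaForm_swap, abs_neg]
      _ ≤ volume ((K + segment ℝ 0 v) ∩ f ⁻¹' Icc (f p) (f p + f v)) :=
          measure_mono (vadd_parallelepiped_subset_add_segment hK hp hq
            (o.areaForm_apply_self _) hpos.le)
      _ ≤ volume ((K + segment ℝ 0 v) ∩ f ⁻¹' Ico (f p) (f p + f v)) +
          volume (f ⁻¹' {f p + f v}) := by
          rw [← Ico_union_right (le_add_of_nonneg_right hpos.le), preimage_union,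
            inter_union_distrib_left]
          exact (measure_union_le _ _).trans (add_le_add_right (measure_mono inter_subset_right) _)
      _ = _ := by rw [addHaar_preimage_singleton volume hf, add_zero]
  calc _ ≤ volume K + volume ((K + segment ℝ 0 v) ∩ f ⁻¹' Ico (f p) (f p + f v)) := by gcongr
    _ ≤ volume (K + segment ℝ 0 v) :=
      measure_add_measure_inter_preimage_Ico_le volume (f := f.toAddMonoidHom)
        f.continuous_of_finiteDimensional.measurable (left_mem_segment ℝ 0 v)
        (right_mem_segment ℝ 0 v) hpos.le K (f p)

theorem volume_add_sum_abs_areaForm_le {ι : Type*} {K : Set E} (hK : Convex ℝ K) (s : Finset ι)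
    (v : ι → E) {p q : ι → E} (hp : ∀ i, p i ∈ K) (hq : ∀ i, q i ∈ K) :
    volume K + ∑ i ∈ s, ENNReal.ofReal |o.areaForm (v i) (q i - p i)| ≤
      volume (K + ∑ i ∈ s, segment ℝ 0 (v i)) := by
  classical
  induction s using Finset.induction_on with
  | empty => simp
  | insert i s hi ih =>
    set Z := ∑ j ∈ s, segment ℝ 0 (v j)
    have hZ : (0 : E) ∈ Z := by
      simpa using Set.finsetSum_mem_finsetSum s _ (fun _ ↦ (0 : E))
        fun j _ ↦ left_mem_segment ℝ 0 (v j)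
    have hKZ : Convex ℝ (K + Z) := hK.add (convex_sum _ fun j _ ↦ convex_segment _ _)
    have hsub : K ⊆ K + Z := subset_add_left K hZ
    rw [Finset.sum_insert hi, Finset.sum_insert hi, add_comm (ENNReal.ofReal _), ← add_assoc,
      add_comm (segment ℝ 0 (v i)), ← add_assoc]
    calc _ ≤ volume (K + Z) + ENNReal.ofReal |o.areaForm (v i) (q i - p i)| := by gcongr
      _ ≤ _ := volume_add_abs_areaForm_le o hKZ (v i) (hsub (hp i)) (hsub (hq i))

theorem sum_abs_areaForm_le_two_mul_volume {ι : Type*} [Fintype ι] {K : Set E} (hK : Convex ℝ K)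
    (hfin : volume K ≠ ⊤) {x : E} {v : ι → E} (hv : x +ᵥ parallelepiped v ⊆ K) {p q : ι → E}
    (hp : ∀ i, p i ∈ K) (hq : ∀ i, q i ∈ K) :
    ∑ i, |o.areaForm (v i) (q i - p i)| ≤ 2 * volume.real K := by
  set V := volume.real K
  set W := ∑ i, |o.areaForm (v i) (q i - p i)|
  have hV : 0 ≤ V := measureReal_nonneg
  have hgrow : ∀ ε > 0, V + ε * W ≤ (1 + ε) ^ 2 * V := by
    intro ε hε
    have hscale : ∑ i, segment ℝ 0 ((ε • v) i) = ε • parallelepiped v := by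
      rw [← parallelepiped_eq_sum_segment]
      exact (image_parallelepiped (ε • LinearMap.id) v).symm
    have h := (volume_add_sum_abs_areaForm_le o hK Finset.univ (ε • v) hp hq).trans
      (hscale ▸ addHaar_add_smul_le volume hK hv hε.le)
    simp only [Pi.smul_apply, map_smul, LinearMap.smul_apply, smul_eq_mul, abs_mul, abs_of_pos hε,
      Fact.out (p := finrank ℝ E = 2)] at h
    rw [← ENNReal.ofReal_sum_of_nonneg fun i _ ↦ by positivity, ← Finset.mul_sum,
      ← ofReal_measureReal hfin, ← ENNReal.ofReal_add hV (by positivity),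
      ← ENNReal.ofReal_mul (by positivity)] at h
    exact (ENNReal.ofReal_le_ofReal_iff (by positivity)).1 h
  refine le_of_forall_pos_le_add fun δ hδ ↦ ?_
  have hε : 0 < δ / (V + 1) := by positivity
  have hδV : δ / (V + 1) * V ≤ δ := by
    rw [div_mul_eq_mul_div, div_le_iff₀ (by positivity)]
    nlinarith
  have hW : W ≤ 2 * V + δ / (V + 1) * V :=
    le_of_mul_le_mul_left (by linarith [hgrow _ hε]) hε
  linarith

end AreaForm

theorem vadd_parallelepiped_subset_iff {E ι : Type*} [AddCommGroup E] [Module ℝ E] [Fintype ι]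
    {K : Set E} (hK : Convex ℝ K) {z : E} {v : ι → E} :
    z +ᵥ parallelepiped v ⊆ K ↔ z +ᵥ ∑ i, {(0 : E), v i} ⊆ K := by
  rw [parallelepiped_eq_convexHull, ← convexHull_vadd, hK.convexHull_subset_iff]

theorem vadd_parallelepiped_pair_subset {E : Type*} [AddCommGroup E] [Module ℝ E] {K : Set E}
    (hK : Convex ℝ K) {z u v : E} (hz : z ∈ K) (hu : z + u ∈ K) (hv : z + v ∈ K)
    (huv : z + (u + v) ∈ K) : z +ᵥ parallelepiped ![u, v] ⊆ K := by
  rw [vadd_parallelepiped_subset_iff hK, Fin.sum_univ_two]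
  rintro _ ⟨_, ⟨_, rfl | rfl, _, rfl | rfl, rfl⟩, rfl⟩
  · simpa only [vadd_eq_add, add_zero] using hz
  · simpa only [vadd_eq_add, zero_add] using hv
  · simpa only [vadd_eq_add, add_zero] using hu
  · exact huv

section Direction

/-- The unit vector at angle `θ` from the positive `x`-axis, in terms of which the sides of the
square and of the triangle are expressed. -/
noncomputable def direction (θ : ℝ) : EuclideanSpace ℝ (Fin 2) :=
  pt (cos θ) (sin θ)

/-- The counterclockwise orientation of the plane, that of the basis `(1, 0)`, `(0, 1)`; its
`areaForm` is the determinant of coordinates. -/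
noncomputable def planeOrientation : Orientation ℝ (EuclideanSpace ℝ (Fin 2)) (Fin 2) :=
  (EuclideanSpace.basisFun (Fin 2) ℝ).toBasis.orientation

theorem areaForm_smul_direction (r s α β : ℝ) :
    planeOrientation.areaForm (r • direction α) (s • direction β) = r * s * sin (β - α) := by
  have hdet : planeOrientation.areaForm (direction α) (direction β) = sin (β - α) := by
    rw [Orientation.areaForm_to_volumeForm, planeOrientation,
      Orientation.volumeForm_robust _ (EuclideanSpace.basisFun (Fin 2) ℝ) rfl, Basis.det_apply,
      Matrix.det_fin_two, sin_sub]
    simp only [direction, pt, WithLp.equiv_symm_apply, Basis.toMatrix_apply,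
      OrthonormalBasis.coe_toBasis_repr_apply, EuclideanSpace.basisFun_repr, Matrix.cons_val_zero,
      Matrix.cons_val_one, Matrix.cons_val_fin_one]
    ring
  rw [map_smul, map_smul, LinearMap.smul_apply, hdet, smul_eq_mul, smul_eq_mul]
  ring

theorem pt_add_smul_direction (x y r θ : ℝ) :
    pt x y + r • direction θ = pt (x + r * cos θ) (y + r * sin θ) := by
  ext i
  fin_cases i <;> rfl

theorem direction_add_pi (θ : ℝ) : direction (θ + π) = -direction θ := by
  rw [direction, cos_add_pi, sin_add_pi]
  ext i
  fin_cases i <;> rfl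

theorem direction_sub_direction (α β : ℝ) :
    direction β - direction α = (2 * sin ((β - α) / 2)) • direction ((α + β) / 2 + π / 2) := by
  have hcos : cos β - cos α = 2 * sin ((β - α) / 2) * -sin ((α + β) / 2) := by
    rw [cos_sub_cos, add_comm β]
    ring
  have hsin : sin β - sin α = 2 * sin ((β - α) / 2) * cos ((α + β) / 2) := by
    rw [sin_sub_sin, add_comm β]
  rw [direction, direction, direction, cos_add_pi_div_two, sin_add_pi_div_two]
  ext i
  fin_cases i
  · exact hcos
  · exact hsin

theorem exists_fin_direction_eq {n : ℕ} [NeZero n] {δ : ℝ} (hδ : n * δ = 2 * π) (θ : ℝ) (m : ℤ) :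
    ∃ k : Fin n, direction (θ + (k : ℕ) * δ) = direction (θ + m * δ) := by
  have hn : (n : ℤ) ≠ 0 := Nat.cast_ne_zero.2 (NeZero.ne n)
  obtain ⟨k, hk⟩ := Int.eq_ofNat_of_zero_le (Int.emod_nonneg m hn)
  have hkn : k < n := by
    exact_mod_cast hk ▸ Int.emod_lt_of_pos m (by positivity)
  refine ⟨⟨k, hkn⟩, ?_⟩
  have hm : (m : ℝ) = k + n * (m / n : ℤ) := by
    exact_mod_cast (hk ▸ Int.emod_add_mul_ediv m n).symm
  have hangle : θ + m * δ = θ + k * δ + (m / n : ℤ) * (2 * π) := by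
    rw [hm, ← hδ]
    ring
  rw [hangle, direction, direction, cos_add_int_mul_two_pi, sin_add_int_mul_two_pi]

end Direction

section Vertices

variable (x y a b : ℝ) (m : ℤ)

theorem exists_sqVertex_eq_add_smul_direction :
    ∃ k, sqVertex x y a k = pt x y + (√2 / 6) • direction (a + m * (π / 2)) := by
  obtain ⟨k, hk⟩ := exists_fin_direction_eq (n := 4) (δ := π / 2) (by push_cast; ring) a m
  exact ⟨k, by rw [← hk, pt_add_smul_direction, sqVertex]⟩

theorem exists_triVertex_eq_add_smul_direction :
    ∃ k, triVertex x y b k = pt x y + (√3 / 6) • direction (b + m * (2 * π / 3)) := by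
  obtain ⟨k, hk⟩ := exists_fin_direction_eq (n := 3) (δ := 2 * π / 3) (by push_cast; ring) b m
  exact ⟨k, by rw [← hk, pt_add_smul_direction, triVertex]⟩

theorem exists_vadd_parallelepiped_subset_convexHull_range_sqVertex :
    ∃ z : EuclideanSpace ℝ (Fin 2),
      z +ᵥ parallelepiped ![(1 / 3 : ℝ) • direction (a + π / 4 + m * (π / 2)),
          (1 / 3 : ℝ) • direction (a + π / 4 + m * (π / 2) + π / 2)] ⊆
        convexHull ℝ (range (sqVertex x y a)) := by
  set K := convexHull ℝ (range (sqVertex x y a))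
  set φ := a + π / 4 + m * (π / 2)
  set V : ℤ → EuclideanSpace ℝ (Fin 2) :=
    fun j ↦ pt x y + (√2 / 6) • direction (a + j * (π / 2)) with hV
  have hmem (j : ℤ) : V j ∈ K := by
    obtain ⟨k, hk⟩ := exists_sqVertex_eq_add_smul_direction x y a j
    exact subset_convexHull ℝ _ ⟨k, hk⟩
  have hside {i j : ℤ} (hangle : sin ((j - i) * (π / 4)) = √2 / 2) {γ : ℝ}
      (hγ : a + (i + j) * (π / 4) + π / 2 = γ) : V i + (1 / 3 : ℝ) • direction γ = V j := by
    have hlength : √2 / 6 * (2 * sin ((a + j * (π / 2) - (a + i * (π / 2))) / 2)) = 1 / 3 := by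
      rw [show (a + j * (π / 2) - (a + i * (π / 2))) / 2 = (j - i) * (π / 4) by ring, hangle]
      linarith [Real.mul_self_sqrt (x := 2) (by norm_num)]
    rw [← eq_sub_iff_add_eq', hV, add_sub_add_left_eq_sub, ← smul_sub, direction_sub_direction,
      smul_smul, hlength, ← hγ]
    congr 2
    ring
  have hu : V (m - 1) + (1 / 3 : ℝ) • direction φ = V m :=
    hside (by push_cast; rw [← sin_pi_div_four]; ring_nf) (by push_cast; ring)
  have hv : V (m - 1) + (1 / 3 : ℝ) • direction (φ + π / 2) = V (m + 2) :=
    hside (by push_cast; rw [← sin_pi_div_four, ← sin_pi_sub]; ring_nf) (by push_cast; ring)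
  have huv : V m + (1 / 3 : ℝ) • direction (φ + π / 2) = V (m + 1) :=
    hside (by push_cast; rw [← sin_pi_div_four]; ring_nf) (by push_cast; ring)
  refine ⟨V (m - 1), vadd_parallelepiped_pair_subset (convex_convexHull ℝ _) (hmem _) ?_ ?_ ?_⟩
  · exact hu ▸ hmem m
  · exact hv ▸ hmem (m + 2)
  · rw [← add_assoc, hu, huv]
    exact hmem (m + 1)

theorem exists_triVertex_sub_triVertex_eq :
    ∃ i j, triVertex x y b j - triVertex x y b i =
      (1 / 2 : ℝ) • direction (b + π / 2 + m * (π / 3)) := by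
  have hodd : ∀ l : ℤ, ∃ i j, triVertex x y b j - triVertex x y b i =
      (1 / 2 : ℝ) • direction (b + π / 2 + (2 * l + 1 : ℤ) * (π / 3)) := by
    intro l
    obtain ⟨i, hi⟩ := exists_triVertex_eq_add_smul_direction x y b l
    obtain ⟨j, hj⟩ := exists_triVertex_eq_add_smul_direction x y b (l + 1)
    refine ⟨i, j, ?_⟩
    rw [hi, hj, add_sub_add_left_eq_sub, ← smul_sub, direction_sub_direction, smul_smul]
    push_cast
    congr 1
    · rw [show (b + (l + 1) * (2 * π / 3) - (b + l * (2 * π / 3))) / 2 = π / 3 by ring,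
        sin_pi_div_three]
      linarith [Real.mul_self_sqrt (x := 3) (by norm_num)]
    · congr 1
      ring
  rcases m.even_or_odd' with ⟨l, rfl | rfl⟩
  · obtain ⟨i, j, hij⟩ := hodd (l + 1)
    have hopposite : b + π / 2 + (2 * (l + 1) + 1 : ℤ) * (π / 3) =
        b + π / 2 + (2 * l : ℤ) * (π / 3) + π := by
      push_cast
      ring
    refine ⟨j, i, ?_⟩
    rw [← neg_sub, hij, hopposite, direction_add_pi, smul_neg, neg_neg]
  · exact hodd l

end Vertices

section Trigonometry

theorem sqrt_three_div_two_mem_Icc : √3 / 2 ∈ Icc (0.8660254037 : ℝ) 0.8660254038 := by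
  refine ⟨?_, ?_⟩
  · linarith [Real.le_sqrt_of_sq_le (x := 1.7320508074) (y := 3) (by norm_num)]
  · linarith [(Real.sqrt_le_left (x := 3) (y := 1.7320508076) (by norm_num)).2 (by norm_num)]

-- The constants: `cos φ = 0.8674…`, `sin φ = 0.4975…` at the `φ < π / 4` with
-- `cos φ + sin φ = 1.364988 = 6 * 0.227498`, and the second bound is the chord from `φ = 0` to
-- this point of the arc on which `cos φ` is a concave function of `sin φ`.
theorem sin_le_and_le_cos_of_cos_add_sin_lt {φ : ℝ} (hφ₀ : 0 ≤ φ) (hφ : φ ≤ π / 4)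
    (h : cos φ + sin φ < 1.364988) :
    sin φ ≤ 0.497556335 ∧ 1 - 0.2664388446 * sin φ ≤ cos φ := by
  have hsin : 0 ≤ sin φ := sin_nonneg_of_nonneg_of_le_pi hφ₀ (by linarith [pi_pos])
  have hsq : sin φ ^ 2 + cos φ ^ 2 = 1 := sin_sq_add_cos_sq φ
  have hle : sin φ ≤ cos φ := by
    rw [← sin_pi_div_two_sub φ]
    exact sin_le_sin_of_le_of_le_pi_div_two (by linarith [pi_pos]) (by linarith) (by linarith)
  -- `(cos φ - sin φ) ^ 2 = 2 - (cos φ + sin φ) ^ 2`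
  have hdiff : 0.36987533 < cos φ - sin φ := by nlinarith
  have hsin_le : sin φ ≤ 0.497556335 := by linarith
  refine ⟨hsin_le, ?_⟩
  by_contra! hlt
  nlinarith

-- The constants are `sin θ` and `cos θ` at the solution of
-- `sin (π / 3 + θ) = 0.909992 = 4 * 0.227498`.
theorem sin_le_and_le_cos_of_sin_pi_div_three_add_lt {θ : ℝ} (hθ₀ : 0 ≤ θ) (hθ : θ ≤ π / 6)
    (h : sin (π / 3 + θ) < 0.909992) : sin θ ≤ 0.0959195181 ∧ 0.9953890927 ≤ cos θ := by
  have hcos_add : 0.4146258071 ≤ cos (π / 3 + θ) := by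
    have hsin₀ : 0 ≤ sin (π / 3 + θ) :=
      sin_nonneg_of_nonneg_of_le_pi (by positivity) (by linarith [pi_pos])
    have hcos₀ : 0 ≤ cos (π / 3 + θ) :=
      cos_nonneg_of_mem_Icc ⟨by linarith [pi_pos], by linarith⟩
    nlinarith [sin_sq_add_cos_sq (π / 3 + θ)]
  have hsin : sin θ ≤ 0.0959195181 := by
    have hsub : sin θ = sin (π / 3 + θ) / 2 - √3 / 2 * cos (π / 3 + θ) := by
      rw [show sin θ = sin (π / 3 + θ - π / 3) by ring_nf, sin_sub, sin_pi_div_three,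
        cos_pi_div_three]
      ring
    have hmul : 0.8660254037 * 0.4146258071 ≤ √3 / 2 * cos (π / 3 + θ) :=
      mul_le_mul sqrt_three_div_two_mem_Icc.1 hcos_add (by norm_num) (by positivity)
    linarith
  refine ⟨hsin, ?_⟩
  have hsin₀ : 0 ≤ sin θ := sin_nonneg_of_nonneg_of_le_pi hθ₀ (by linarith [pi_pos])
  have hcos₀ : 0 ≤ cos θ := cos_nonneg_of_mem_Icc ⟨by linarith [pi_pos], by linarith [pi_pos]⟩
  nlinarith [sin_sq_add_cos_sq θ]

theorem le_cos_add_half_sin_sub {φ θ : ℝ} (hφ₀ : 0 ≤ sin φ) (hφ : sin φ ≤ 0.497556335)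
    (hcos : 1 - 0.2664388446 * sin φ ≤ cos φ)
    (hsinθ : sin θ ≤ 0.0959195181) (hcosθ : 0.9953890927 ≤ cos θ) :
    1.364988 ≤ cos φ + sin (π / 3 + φ - θ) / 2 := by
  obtain ⟨ht_le, hle_t⟩ := sqrt_three_div_two_mem_Icc
  have hcosφ₀ : 0 ≤ cos φ := by linarith
  have hsin_eq : sin (π / 3 + φ) = √3 / 2 * cos φ + sin φ / 2 := by
    rw [sin_add, sin_pi_div_three, cos_pi_div_three]
    ring
  have hcos_eq : cos (π / 3 + φ) = cos φ / 2 - √3 / 2 * sin φ := by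
    rw [cos_add, sin_pi_div_three, cos_pi_div_three]
    ring
  have hcos_add : 0 ≤ cos (π / 3 + φ) := by
    rw [hcos_eq]
    nlinarith
  have hfirst : 0.9953890927 * sin (π / 3 + φ) ≤ cos θ * sin (π / 3 + φ) :=
    mul_le_mul_of_nonneg_right hcosθ (by rw [hsin_eq]; positivity)
  have hsecond : sin θ * cos (π / 3 + φ) ≤ 0.0959195181 * cos (π / 3 + φ) :=
    mul_le_mul_of_nonneg_right hsinθ hcos_add
  have htc : 0.8660254037 * cos φ ≤ √3 / 2 * cos φ := mul_le_mul_of_nonneg_right ht_le hcosφ₀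
  have hts : 0.8660254037 * sin φ ≤ √3 / 2 * sin φ := mul_le_mul_of_nonneg_right ht_le hφ₀
  -- `cos φ` occurs with a positive coefficient, so `hcos` makes the claim linear in `sin φ`.
  rw [sin_sub]
  linarith

theorem sin_pi_div_three_add_abs_le {θ B : ℝ} (h : ∀ k : ℤ, |sin (θ + k * (π / 3))| ≤ B) :
    sin (π / 3 + |θ|) ≤ B := by
  rcases abs_choice θ with habs | habs <;> rw [habs]
  · have hone := (le_abs_self _).trans (h 1)
    rwa [Int.cast_one, one_mul, add_comm] at hone
  · have hneg_one := (neg_le_abs _).trans (h (-1))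
    rwa [← sin_neg, Int.cast_neg, Int.cast_one,
      show -(θ + -1 * (π / 3)) = π / 3 + -θ by ring] at hneg_one

theorem le_of_forall_side_bounds {A φ θ : ℝ} (hφ : |φ| ≤ π / 4) (hθ : |θ| ≤ π / 6)
    (hsegment : |cos φ| + |sin φ| ≤ 6 * A)
    (htriangle : ∀ k : ℤ, |sin (θ + k * (π / 3))| ≤ 4 * A)
    (hmixed : ∀ k : ℤ, |cos φ| + |sin (θ + k * (π / 3) - φ)| / 2 ≤ 6 * A) :
    0.227498 ≤ A := by
  wlog hφ₀ : 0 ≤ φ generalizing φ θ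
  · refine this (φ := -φ) (θ := -θ) (by rwa [abs_neg]) (by rwa [abs_neg])
      (by rwa [cos_neg, sin_neg, abs_neg (sin φ)]) (fun k ↦ ?_) (fun k ↦ ?_) (by linarith)
    · rw [← abs_neg, ← sin_neg]
      convert htriangle (-k) using 3
      push_cast
      ring
    · rw [cos_neg, ← abs_neg (sin _), ← sin_neg]
      convert hmixed (-k) using 5
      push_cast
      ring
  by_contra! hA
  have hφ_le : φ ≤ π / 4 := (le_abs_self φ).trans hφ
  obtain ⟨hsinθ, hcosθ⟩ :=
    sin_le_and_le_cos_of_sin_pi_div_three_add_lt (abs_nonneg θ) hθ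
      (by linarith [sin_pi_div_three_add_abs_le htriangle])
  rw [← abs_sin_eq_sin_abs_of_abs_le_pi (by linarith [pi_pos])] at hsinθ
  rw [cos_abs] at hcosθ
  obtain ⟨hsinφ, hcosφ⟩ := sin_le_and_le_cos_of_cos_add_sin_lt hφ₀ hφ_le
    (by linarith [le_abs_self (cos φ), le_abs_self (sin φ)])
  have hlower := le_cos_add_half_sin_sub
    (sin_nonneg_of_nonneg_of_le_pi hφ₀ (by linarith [pi_pos])) hsinφ hcosφ
    ((le_abs_self _).trans hsinθ) hcosθ
  have hupper := hmixed (-1)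
  rw [← abs_neg (sin _), ← sin_neg, Int.cast_neg, Int.cast_one,
    show -(θ + -1 * (π / 3) - φ) = π / 3 + φ - θ by ring] at hupper
  linarith [le_abs_self (cos φ), le_abs_self (sin (π / 3 + φ - θ))]

theorem exists_int_abs_add_mul_le (x : ℝ) {p : ℝ} (hp : 0 < p) : ∃ k : ℤ, |x + k * p| ≤ p / 2 := by
  refine ⟨-round (x / p), ?_⟩
  have hx : x + (-round (x / p) : ℤ) * p = (x / p - round (x / p)) * p := by
    push_cast
    field_simp
    ring
  rw [hx, abs_mul, abs_of_pos hp]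
  linarith [mul_le_mul_of_nonneg_right (abs_sub_round (x / p)) hp.le]

end Trigonometry

section SideBounds

variable (x1 y1 a x2 y2 b : ℝ)

theorem pt_zero_zero_mem_config : pt 0 0 ∈ config x1 y1 a x2 y2 b :=
  .inl (.inl (.inl rfl))

theorem pt_one_zero_mem_config : pt 1 0 ∈ config x1 y1 a x2 y2 b :=
  .inl (.inl (.inr rfl))

theorem triVertex_mem_config (k : Fin 3) : triVertex x2 y2 b k ∈ config x1 y1 a x2 y2 b :=
  .inr (mem_range_self k)

theorem range_sqVertex_subset_config : range (sqVertex x1 y1 a) ⊆ config x1 y1 a x2 y2 b :=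
  subset_union_right.trans subset_union_left

theorem sum_abs_areaForm_le_two_mul_area {ι : Type*} [Fintype ι] {z : EuclideanSpace ℝ (Fin 2)}
    {v p q : ι → EuclideanSpace ℝ (Fin 2)}
    (hv : z +ᵥ parallelepiped v ⊆ convexHull ℝ (config x1 y1 a x2 y2 b))
    (hp : ∀ i, p i ∈ config x1 y1 a x2 y2 b) (hq : ∀ i, q i ∈ config x1 y1 a x2 y2 b) :
    ∑ i, |planeOrientation.areaForm (v i) (q i - p i)| ≤ 2 * area x1 y1 a x2 y2 b := by
  have hfinite : (config x1 y1 a x2 y2 b).Finite :=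
    ((toFinite _).union (finite_range _)).union (finite_range _)
  exact sum_abs_areaForm_le_two_mul_volume planeOrientation (convex_convexHull ℝ _)
    (hfinite.isCompact_convexHull (𝕜 := ℝ)).measure_lt_top.ne hv
    (fun i ↦ subset_convexHull ℝ _ (hp i)) (fun i ↦ subset_convexHull ℝ _ (hq i))

theorem pt_one_zero_sub_pt_zero_zero : pt 1 0 - pt 0 0 = (1 : ℝ) • direction 0 := by
  rw [direction, cos_zero, sin_zero, one_smul]
  ext i
  fin_cases i <;> exact sub_zero _

theorem abs_sin_le_four_mul_area (k : ℤ) :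
    |sin (b + π / 2 + k * (π / 3))| ≤ 4 * area x1 y1 a x2 y2 b := by
  obtain ⟨i, j, hij⟩ := exists_triVertex_sub_triVertex_eq x2 y2 b k
  have hEF : pt 0 0 +ᵥ parallelepiped (fun _ : Fin 1 ↦ (1 : ℝ) • direction 0) ⊆
      convexHull ℝ (config x1 y1 a x2 y2 b) := by
    rw [vadd_parallelepiped_subset_iff (convex_convexHull ℝ _), Fin.sum_univ_one,
      ← pt_one_zero_sub_pt_zero_zero]
    refine Subset.trans ?_ (subset_convexHull ℝ _)
    rintro _ ⟨_, rfl | rfl, rfl⟩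
    · simpa only [vadd_eq_add, add_zero] using pt_zero_zero_mem_config x1 y1 a x2 y2 b
    · simpa only [vadd_eq_add, add_sub_cancel] using pt_one_zero_mem_config x1 y1 a x2 y2 b
  have h := sum_abs_areaForm_le_two_mul_area x1 y1 a x2 y2 b hEF
    (p := fun _ ↦ triVertex x2 y2 b i) (q := fun _ ↦ triVertex x2 y2 b j)
    (fun _ ↦ triVertex_mem_config x1 y1 a x2 y2 b i)
    (fun _ ↦ triVertex_mem_config x1 y1 a x2 y2 b j)
  rw [Fin.sum_univ_one, hij, areaForm_smul_direction, one_mul, sub_zero, abs_mul,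
    abs_of_pos one_half_pos] at h
  linarith

theorem abs_mul_sin_add_abs_mul_cos_le_six_mul_area (m : ℤ)
    {p q p' q' : EuclideanSpace ℝ (Fin 2)} {s s' θ θ' : ℝ}
    (hp : p ∈ config x1 y1 a x2 y2 b) (hq : q ∈ config x1 y1 a x2 y2 b)
    (hp' : p' ∈ config x1 y1 a x2 y2 b) (hq' : q' ∈ config x1 y1 a x2 y2 b)
    (hpq : q - p = s • direction θ) (hpq' : q' - p' = s' • direction θ') :
    |s * sin (θ - (a + π / 4 + m * (π / 2)))| + |s' * cos (θ' - (a + π / 4 + m * (π / 2)))| ≤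
      6 * area x1 y1 a x2 y2 b := by
  obtain ⟨z, hz⟩ := exists_vadd_parallelepiped_subset_convexHull_range_sqVertex x1 y1 a m
  have h := sum_abs_areaForm_le_two_mul_area x1 y1 a x2 y2 b
    (hz.trans (convexHull_mono (range_sqVertex_subset_config x1 y1 a x2 y2 b)))
    (p := ![p, p']) (q := ![q, q']) (Fin.forall_fin_two.2 ⟨hp, hp'⟩)
    (Fin.forall_fin_two.2 ⟨hq, hq'⟩)
  simp only [Fin.sum_univ_two, Matrix.cons_val_zero, Matrix.cons_val_one, hpq, hpq',
    areaForm_smul_direction, ← sub_sub, sin_sub_pi_div_two, mul_assoc, mul_neg, abs_neg] at h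
  rw [abs_mul, abs_mul (1 / 3), abs_of_pos (by norm_num)] at h
  simp only [← sub_sub]
  linarith

theorem abs_cos_add_abs_sin_le_six_mul_area (m : ℤ) :
    |cos (a + π / 4 + m * (π / 2))| + |sin (a + π / 4 + m * (π / 2))| ≤
      6 * area x1 y1 a x2 y2 b := by
  have h := abs_mul_sin_add_abs_mul_cos_le_six_mul_area x1 y1 a x2 y2 b m
    (pt_zero_zero_mem_config ..) (pt_one_zero_mem_config ..) (pt_zero_zero_mem_config ..)
    (pt_one_zero_mem_config ..) pt_one_zero_sub_pt_zero_zero pt_one_zero_sub_pt_zero_zero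
  rwa [one_mul, one_mul, zero_sub, sin_neg, cos_neg, abs_neg, add_comm] at h

theorem abs_cos_add_half_abs_sin_le_six_mul_area (m k : ℤ) :
    |cos (a + π / 4 + m * (π / 2))| +
        |sin (b + π / 2 + k * (π / 3) - (a + π / 4 + m * (π / 2)))| / 2 ≤
      6 * area x1 y1 a x2 y2 b := by
  obtain ⟨i, j, hij⟩ := exists_triVertex_sub_triVertex_eq x2 y2 b k
  have h := abs_mul_sin_add_abs_mul_cos_le_six_mul_area x1 y1 a x2 y2 b m
    (triVertex_mem_config ..) (triVertex_mem_config ..) (pt_zero_zero_mem_config ..)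
    (pt_one_zero_mem_config ..) hij pt_one_zero_sub_pt_zero_zero
  rw [one_mul, zero_sub, cos_neg, abs_mul, abs_of_pos (by norm_num)] at h
  linarith

end SideBounds

theorem moser_lower_bound (x1 y1 a x2 y2 b : ℝ) :
    area x1 y1 a x2 y2 b ≥ 0.227498 := by
  obtain ⟨m, hm⟩ := exists_int_abs_add_mul_le (a + π / 4) (p := π / 2) (by positivity)
  obtain ⟨l, hl⟩ := exists_int_abs_add_mul_le (b + π / 2) (p := π / 3) (by positivity)
  have hshift (k : ℤ) : b + π / 2 + l * (π / 3) + k * (π / 3) =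
      b + π / 2 + (l + k : ℤ) * (π / 3) := by
    push_cast
    ring
  refine le_of_forall_side_bounds (hm.trans_eq (by ring)) (hl.trans_eq (by ring))
    (abs_cos_add_abs_sin_le_six_mul_area x1 y1 a x2 y2 b m) (fun k ↦ ?_) (fun k ↦ ?_)
  · rw [hshift]
    exact abs_sin_le_four_mul_area x1 y1 a x2 y2 b (l + k)
  · rw [hshift]
    exact abs_cos_add_half_abs_sin_le_six_mul_area x1 y1 a x2 y2 b m (l + k)
end

section
/- Every convex universal cover for unit-length planar arcs has 2-dimensional Lebesgue measure at least 0.227498. -/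
open Real MeasureTheory

/-!
Mixed area is monotone, so a convex body `K` has area at least its mixed area with any convex
subset. For a rectangle or a segment contained in `K` this is a bound by elementary pieces: the
rectangle and the triangles joining its sides to the extreme points of `K`, or two triangles with
the segment as base.

A cover contains a square of side `1 / 3`, a segment of length `1` and an equilateral triangle of
side `1 / 2`, the convex hulls of three polygonal arcs. Choose coordinates along the square and
suppose that the area of `K` is less than `0.227498`. The mixed areas of the segment with the sides
of the triangle force one of these sides to within about `5.5°` of the direction of the segment. The
mixed area of the square and the segment forces the segment to within about `29.8°` of a side of the
square. But then the triangle is so tall across that side of the square that the mixed area of the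
square with the union of the segment and the triangle is at least `0.227498`.
-/

open Set

/-! ### Areas of triangles and rectangles -/

/-- The Euclidean plane. -/
abbrev Plane : Type := EuclideanSpace ℝ (Fin 2)

@[simp] lemma pt_apply_zero (x y : ℝ) : pt x y 0 = x := rfl

@[simp] lemma pt_apply_one (x y : ℝ) : pt x y 1 = y := rfl

lemma Plane.ext {p q : Plane} (h₀ : p 0 = q 0) (h₁ : p 1 = q 1) : p = q := by
  ext i
  fin_cases i <;> assumption

/-- The open triangle with vertices `A`, `B`, `C`: all barycentric coordinates are positive. If the
vertices are collinear this is a segment or a point, not the (empty) interior of the triangle. -/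
def openTriangle {E : Type*} [AddCommGroup E] [Module ℝ E] (A B C : E) : Set E :=
  {p | ∃ r s t : ℝ, 0 < r ∧ 0 < s ∧ 0 < t ∧ r + s + t = 1 ∧ r • A + s • B + t • C = p}

section openTriangle

variable {E F : Type*} [AddCommGroup E] [Module ℝ E] [AddCommGroup F] [Module ℝ F]

lemma convex_openTriangle (A B C : E) : Convex ℝ (openTriangle A B C) := by
  refine convex_iff_forall_pos.2 ?_
  rintro _ ⟨r, s, t, hr, hs, ht, hrst, rfl⟩ _ ⟨r', s', t', hr', hs', ht', hrst', rfl⟩ a b ha hb hab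
  exact ⟨a * r + b * r', a * s + b * s', a * t + b * t', by positivity, by positivity,
    by positivity, by linear_combination a * hrst + b * hrst' + hab, by module⟩

lemma openTriangle_subset {K : Set E} (hK : Convex ℝ K) {A B C : E} (hA : A ∈ K) (hB : B ∈ K)
    (hC : C ∈ K) : openTriangle A B C ⊆ K := by
  rintro _ ⟨r, s, t, hr, hs, ht, hrst, rfl⟩
  simpa [Fin.sum_univ_three] using hK.sum_mem (t := Finset.univ) (w := ![r, s, t])
    (z := ![A, B, C]) (by simp [Fin.forall_fin_succ, hr.le, hs.le, ht.le])
    (by simpa [Fin.sum_univ_three] using hrst) (by simp [Fin.forall_fin_succ, hA, hB, hC])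

lemma image_openTriangle (f : E →ₗ[ℝ] F) (A B C : E) :
    f '' openTriangle A B C = openTriangle (f A) (f B) (f C) := by
  ext p
  constructor
  · rintro ⟨_, ⟨r, s, t, hr, hs, ht, hrst, rfl⟩, rfl⟩
    exact ⟨r, s, t, hr, hs, ht, hrst, by simp⟩
  · rintro ⟨r, s, t, hr, hs, ht, hrst, rfl⟩
    exact ⟨_, ⟨r, s, t, hr, hs, ht, hrst, rfl⟩, by simp⟩

lemma image_add_left_openTriangle (v A B C : E) :
    (v + ·) '' openTriangle A B C = openTriangle (v + A) (v + B) (v + C) := by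
  have key (r s t : ℝ) (h : r + s + t = 1) :
      r • (v + A) + s • (v + B) + t • (v + C) = v + (r • A + s • B + t • C) := by
    obtain rfl : r = 1 - s - t := by linarith
    module
  ext p
  constructor
  · rintro ⟨_, ⟨r, s, t, hr, hs, ht, hrst, rfl⟩, rfl⟩
    exact ⟨r, s, t, hr, hs, ht, hrst, key r s t hrst⟩
  · rintro ⟨r, s, t, hr, hs, ht, hrst, rfl⟩
    exact ⟨_, ⟨r, s, t, hr, hs, ht, hrst, rfl⟩, (key r s t hrst).symm⟩

lemma disjoint_openTriangle_of_lt (f : E →ₗ[ℝ] ℝ) {S : Set E} {c : ℝ} (hS : ∀ p ∈ S, c < f p)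
    {A B C : E} (hA : f A ≤ c) (hB : f B ≤ c) (hC : f C ≤ c) : Disjoint S (openTriangle A B C) :=
  Set.disjoint_left.2 fun p hpS hp ↦
    (hS p hpS).not_ge (openTriangle_subset (convex_halfSpace_le f.isLinear c) hA hB hC hp)

lemma disjoint_openTriangle_of_opposite_sides (f : E →ₗ[ℝ] ℝ) {A B C D : E} (hAB : f A = f B)
    (h : (f C - f A) * (f D - f A) < 0) :
    Disjoint (openTriangle A B C) (openTriangle A B D) := by
  rw [Set.disjoint_left]
  rintro _ ⟨r, s, t, -, -, ht, hrst, rfl⟩ ⟨r', s', t', -, -, ht', hrst', hp⟩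
  have hf := congrArg f hp
  simp only [map_add, map_smul, smul_eq_mul, ← hAB] at hf
  have hCD : t * (f C - f A) = t' * (f D - f A) := by
    linear_combination -hf - f A * (hrst - hrst')
  have hneg : t' * ((f C - f A) * (f D - f A)) < 0 := mul_neg_of_pos_of_neg ht' h
  have hnonneg : 0 ≤ t * (f C - f A) ^ 2 := by positivity
  have : t * (f C - f A) ^ 2 = t' * ((f C - f A) * (f D - f A)) := by
    linear_combination (f C - f A) * hCD
  linarith

/-- At a common point, the functional `f`, not smaller at `P` than at `Q`, forces the weight of
`P` to be less than that of `Q`, and `g` forces the opposite. -/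
lemma disjoint_openTriangle_of_corner (f g : E →ₗ[ℝ] ℝ) {X Y Z P Q : E}
    (hfY : f Y = f X) (hgY : g Y < g X) (hgZ : g Z = g X) (hfZ : f Z < f X)
    (hfP : f X ≤ f P) (hgQ : g X ≤ g Q) (hfQP : f Q ≤ f P) (hgPQ : g P ≤ g Q) :
    Disjoint (openTriangle Y X P) (openTriangle X Z Q) := by
  rw [Set.disjoint_left]
  rintro _ ⟨r, s, t, hr, -, ht, hrst, rfl⟩ ⟨r', s', t', -, hs', ht', hrst', hp⟩
  have hf := congrArg f hp
  have hg := congrArg g hp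
  simp only [map_add, map_smul, smul_eq_mul, hfY, hgZ] at hf hg
  have hf' : t * (f P - f X) = t' * (f Q - f X) - s' * (f X - f Z) := by
    linear_combination -hf - f X * (hrst - hrst')
  have hg' : t' * (g Q - g X) = t * (g P - g X) - r * (g X - g Y) := by
    linear_combination hg + g X * (hrst - hrst')
  have hfpos := mul_pos hs' (sub_pos.2 hfZ)
  have hgpos := mul_pos hr (sub_pos.2 hgY)
  rcases le_total t t' with htt | htt
  · have := mul_le_mul_of_nonneg_right htt (sub_nonneg.2 hgQ)
    have := mul_le_mul_of_nonneg_left hgPQ ht.le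
    linarith
  · have := mul_le_mul_of_nonneg_right htt (sub_nonneg.2 hfP)
    have := mul_le_mul_of_nonneg_left hfQP ht'.le
    linarith

end openTriangle

/-- The determinant of a pair of plane vectors (the signed area of the parallelogram they span), as
a bilinear form. -/
def planeDet : Plane →ₗ[ℝ] Plane →ₗ[ℝ] ℝ :=
  LinearMap.mk₂ ℝ (fun u v ↦ u 0 * v 1 - u 1 * v 0)
    (fun _ _ _ ↦ by simp only [PiLp.add_apply]; ring)
    (fun _ _ _ ↦ by simp only [PiLp.smul_apply, smul_eq_mul]; ring)
    (fun _ _ _ ↦ by simp only [PiLp.add_apply]; ring)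
    (fun _ _ _ ↦ by simp only [PiLp.smul_apply, smul_eq_mul]; ring)

lemma planeDet_apply (u v : Plane) : planeDet u v = u 0 * v 1 - u 1 * v 0 := rfl

lemma measurePreserving_pt : MeasurePreserving fun p : ℝ × ℝ ↦ pt p.1 p.2 :=
  (PiLp.volume_preserving_toLp (Fin 2)).comp (volume_preserving_finTwoArrow ℝ).symm

lemma volume_openTriangle_zero_pt_pt :
    volume (openTriangle 0 (pt 1 0) (pt 0 1)) = ENNReal.ofReal (1 / 2) := by
  have hpre : (fun p : ℝ × ℝ ↦ pt p.1 p.2) ⁻¹' openTriangle 0 (pt 1 0) (pt 0 1) =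
      regionBetween (fun _ ↦ 0) (fun x ↦ 1 - x) (Ioc 0 1) := by
    ext ⟨x, y⟩
    constructor
    · rintro ⟨r, s, t, hr, hs, ht, hrst, h⟩
      have hx : s = x := by simpa using congrArg (· 0) h
      have hy : t = y := by simpa using congrArg (· 1) h
      exact ⟨⟨by linarith, by linarith⟩, by simpa [← hy], by dsimp only; linarith⟩
    · rintro ⟨⟨hx, -⟩, hy, hxy⟩
      exact ⟨1 - x - y, x, y, by linarith, hx, hy, by ring, Plane.ext (by simp) (by simp)⟩
  rw [← measurePreserving_pt.measure_preimage ((convex_openTriangle _ _ _).nullMeasurableSet _),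
    hpre, Measure.volume_eq_prod, volume_regionBetween_eq_integral
      (Continuous.integrableOn_Ioc (by fun_prop)) (Continuous.integrableOn_Ioc (by fun_prop))
      measurableSet_Ioc (by simp +contextual), ← intervalIntegral.integral_of_le zero_le_one]
  congr 1
  simp only [Pi.sub_apply, sub_zero]
  rw [intervalIntegral.integral_sub (by simp) (by simp), integral_id]
  norm_num

lemma volume_openTriangle (A B C : Plane) :
    volume (openTriangle A B C) = ENNReal.ofReal (|planeDet (B - A) (C - A)| / 2) := by
  let M : Matrix (Fin 2) (Fin 2) ℝ := !![(B - A) 0, (C - A) 0; (B - A) 1, (C - A) 1]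
  let L : Plane →ₗ[ℝ] Plane := Matrix.toLpLin 2 2 M
  have hL₁ : A + L (pt 1 0) = B := Plane.ext (by simp [L, M, pt]) (by simp [L, M, pt])
  have hL₂ : A + L (pt 0 1) = C := Plane.ext (by simp [L, M, pt]) (by simp [L, M, pt])
  have himage : openTriangle A B C = (A + ·) '' (L '' openTriangle 0 (pt 1 0) (pt 0 1)) := by
    rw [image_openTriangle, image_add_left_openTriangle, map_zero, add_zero, hL₁, hL₂]
  have hdet : LinearMap.det L = planeDet (B - A) (C - A) := by
    rw [LinearMap.det_toLpLin, Matrix.det_fin_two_of, planeDet_apply]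
    ring
  rw [himage, Set.image_add_left, measure_preimage_add, Measure.addHaar_image_linearMap,
    volume_openTriangle_zero_pt_pt, hdet, ← ENNReal.ofReal_mul (abs_nonneg _), mul_one_div]

lemma ofReal_planeDet_div_two_le_volume_openTriangle (A B C : Plane) :
    ENNReal.ofReal (planeDet (B - A) (C - A) / 2) ≤ volume (openTriangle A B C) := by
  rw [volume_openTriangle]
  gcongr
  exact le_abs_self _

lemma abs_sub_le_max_of_mul_nonneg {x y : ℝ} (h : 0 ≤ x * y) : |x - y| ≤ max |x| |y| := by
  rw [le_max_iff]
  rcases mul_nonneg_iff.1 h with ⟨hx, hy⟩ | ⟨hx, hy⟩ <;>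
  cases abs_cases x <;> cases abs_cases y <;> cases abs_cases (x - y) <;> grind

lemma measure_union_of_convex {E : Type*} [NormedAddCommGroup E] [NormedSpace ℝ E]
    [FiniteDimensional ℝ E] [MeasurableSpace E] [BorelSpace E] (μ : Measure E) [μ.IsAddHaarMeasure]
    {s t : Set E} (ht : Convex ℝ t) (hst : Disjoint s t) : μ (s ∪ t) = μ s + μ t :=
  measure_union₀ (ht.nullMeasurableSet μ) hst.aedisjoint

/-- Segment case of the monotonicity of mixed area: the mixed area of `K` and a segment is half the
length of the segment times the width of `K` across it. -/
lemma ofReal_abs_planeDet_div_two_le_volume {K : Set Plane} (hK : Convex ℝ K) {A B C D : Plane}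
    (hA : A ∈ K) (hB : B ∈ K) (hC : C ∈ K) (hD : D ∈ K) :
    ENNReal.ofReal (|planeDet (B - A) (D - C)| / 2) ≤ volume K := by
  set x := planeDet (B - A) (D - A) with hx
  set y := planeDet (B - A) (C - A) with hy
  have hxy : planeDet (B - A) (D - C) = x - y := by
    rw [hx, hy, ← map_sub, sub_sub_sub_cancel_right]
  have hABD := openTriangle_subset hK hA hB hD
  have hABC := openTriangle_subset hK hA hB hC
  have hvolD : volume (openTriangle A B D) = ENNReal.ofReal (|x| / 2) := volume_openTriangle A B D
  have hvolC : volume (openTriangle A B C) = ENNReal.ofReal (|y| / 2) := volume_openTriangle A B C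
  rw [hxy]
  rcases le_or_gt 0 (x * y) with hsame | hopp
  · rcases le_max_iff.1 (abs_sub_le_max_of_mul_nonneg hsame) with h | h
    · calc ENNReal.ofReal (|x - y| / 2) ≤ ENNReal.ofReal (|x| / 2) := by gcongr
        _ ≤ volume K := hvolD ▸ measure_mono hABD
    · calc ENNReal.ofReal (|x - y| / 2) ≤ ENNReal.ofReal (|y| / 2) := by gcongr
        _ ≤ volume K := hvolC ▸ measure_mono hABC
  · have hAB : planeDet (B - A) A = planeDet (B - A) B := by
      simp only [planeDet_apply, PiLp.sub_apply]
      ring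
    have hdisj : Disjoint (openTriangle A B D) (openTriangle A B C) :=
      disjoint_openTriangle_of_opposite_sides (planeDet (B - A)) hAB
        (by simpa only [hx, hy, map_sub] using hopp)
    calc ENNReal.ofReal (|x - y| / 2) ≤ ENNReal.ofReal (|x| / 2 + |y| / 2) := by
          gcongr
          linarith [abs_sub x y]
      _ ≤ volume (openTriangle A B D) + volume (openTriangle A B C) := by
          rw [hvolD, hvolC]
          exact ENNReal.ofReal_add_le
      _ = volume (openTriangle A B D ∪ openTriangle A B C) :=
          (measure_union_of_convex volume (convex_openTriangle A B C) hdisj).symm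
      _ ≤ volume K := measure_mono (union_subset hABD hABC)

/-- The open axis-parallel rectangle with opposite corners `pt 0 0` and `pt a b`. -/
def openRectangle (a b : ℝ) : Set Plane := {p | p 0 ∈ Ioo 0 a ∧ p 1 ∈ Ioo 0 b}

lemma volume_openRectangle {a : ℝ} (ha : 0 ≤ a) (b : ℝ) :
    volume (openRectangle a b) = ENNReal.ofReal (a * b) := by
  have hpre : (fun p : ℝ × ℝ ↦ pt p.1 p.2) ⁻¹' openRectangle a b = Ioo 0 a ×ˢ Ioo 0 b := rfl
  have hconv : Convex ℝ (openRectangle a b) :=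
    ((convex_Ioo 0 a).linear_preimage (EuclideanSpace.projₗ 0)).inter
      ((convex_Ioo 0 b).linear_preimage (EuclideanSpace.projₗ 1))
  rw [← measurePreserving_pt.measure_preimage (hconv.nullMeasurableSet _), hpre,
    Measure.volume_eq_prod, Measure.prod_prod, Real.volume_Ioo, Real.volume_Ioo, sub_zero, sub_zero,
    ENNReal.ofReal_mul ha]

lemma openRectangle_subset {K : Set Plane} (hK : Convex ℝ K) {a b : ℝ} (h₀₀ : pt 0 0 ∈ K)
    (h₁₀ : pt a 0 ∈ K) (h₀₁ : pt 0 b ∈ K) (h₁₁ : pt a b ∈ K) : openRectangle a b ⊆ K := by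
  rintro p ⟨⟨hx, hx'⟩, hy, hy'⟩
  have ha : 0 < a := hx.trans hx'
  have hb : 0 < b := hy.trans hy'
  have hrow (y : ℝ) (h₀ : pt 0 y ∈ K) (h₁ : pt a y ∈ K) : pt (p 0) y ∈ K := by
    convert hK h₀ h₁ (a := 1 - p 0 / a) (b := p 0 / a)
      (sub_nonneg.2 ((div_le_one ha).2 hx'.le)) (by positivity) (by ring) using 1
    exact Plane.ext (by simp [ha.ne']) (by simp; ring)
  convert hK (hrow 0 h₀₀ h₁₀) (hrow b h₀₁ h₁₁) (a := 1 - p 1 / b) (b := p 1 / b)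
    (sub_nonneg.2 ((div_le_one hb).2 hy'.le)) (by positivity) (by ring) using 1
  exact Plane.ext (by simp; ring) (by simp [hb.ne'])

/-! ### Mixed area with a rectangle -/

/-- The axis-parallel bounding box of `S` is determined by `L`, `R`, `B`, `T`, its leftmost,
rightmost, bottommost and topmost points. -/
structure IsBoundingBox (S : Set Plane) (L R B T : Plane) : Prop where
  fst_mem : ∀ P ∈ S, P 0 ∈ Icc (L 0) (R 0)
  snd_mem : ∀ P ∈ S, P 1 ∈ Icc (B 1) (T 1)

lemma exists_isBoundingBox {S : Set Plane} (hS : S.Finite) (hne : S.Nonempty) :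
    ∃ L ∈ S, ∃ R ∈ S, ∃ B ∈ S, ∃ T ∈ S, IsBoundingBox S L R B T := by
  obtain ⟨L, hL, hL'⟩ := S.exists_min_image (· 0) hS hne
  obtain ⟨R, hR, hR'⟩ := S.exists_max_image (· 0) hS hne
  obtain ⟨B, hB, hB'⟩ := S.exists_min_image (· 1) hS hne
  obtain ⟨T, hT, hT'⟩ := S.exists_max_image (· 1) hS hne
  exact ⟨L, hL, R, hR, B, hB, T, hT, fun P hP ↦ ⟨hL' P hP, hR' P hP⟩,
    fun P hP ↦ ⟨hB' P hP, hT' P hP⟩⟩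

section Caps

variable {a b : ℝ} {S : Set Plane} {L R B T : Plane}

lemma disjoint_openRectangle_caps (hS : IsBoundingBox S L R B T) (h₀₀ : pt 0 0 ∈ S)
    (h₁₁ : pt a b ∈ S) :
    Disjoint (openRectangle a b) (openTriangle (pt 0 0) (pt 0 b) L) ∧
    Disjoint (openRectangle a b) (openTriangle (pt 0 b) (pt a b) T) ∧
    Disjoint (openRectangle a b) (openTriangle (pt a b) (pt a 0) R) ∧
    Disjoint (openRectangle a b) (openTriangle (pt a 0) (pt 0 0) B) := by
  have hL : L 0 ≤ 0 := (hS.fst_mem _ h₀₀).1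
  have hR : a ≤ R 0 := (hS.fst_mem _ h₁₁).2
  have hB : B 1 ≤ 0 := (hS.snd_mem _ h₀₀).1
  have hT : b ≤ T 1 := (hS.snd_mem _ h₁₁).2
  let x : Plane →ₗ[ℝ] ℝ := EuclideanSpace.projₗ 0
  let y : Plane →ₗ[ℝ] ℝ := EuclideanSpace.projₗ 1
  exact ⟨disjoint_openTriangle_of_lt (c := 0) x (fun p hp ↦ hp.1.1) le_rfl le_rfl hL,
    disjoint_openTriangle_of_lt (c := -b) (-y) (fun p hp ↦ neg_lt_neg hp.2.2) le_rfl le_rfl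
      (neg_le_neg hT),
    disjoint_openTriangle_of_lt (c := -a) (-x) (fun p hp ↦ neg_lt_neg hp.1.2) le_rfl le_rfl
      (neg_le_neg hR),
    disjoint_openTriangle_of_lt (c := 0) y (fun p hp ↦ hp.2.1) le_rfl le_rfl hB⟩

lemma disjoint_opposite_caps (ha : 0 < a) (hb : 0 < b) (hS : IsBoundingBox S L R B T)
    (h₀₀ : pt 0 0 ∈ S) (h₁₁ : pt a b ∈ S) :
    Disjoint (openTriangle (pt 0 0) (pt 0 b) L) (openTriangle (pt a b) (pt a 0) R) ∧
    Disjoint (openTriangle (pt 0 b) (pt a b) T) (openTriangle (pt a 0) (pt 0 0) B) := by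
  have hL : L 0 ≤ 0 := (hS.fst_mem _ h₀₀).1
  have hR : a ≤ R 0 := (hS.fst_mem _ h₁₁).2
  have hB : B 1 ≤ 0 := (hS.snd_mem _ h₀₀).1
  have hT : b ≤ T 1 := (hS.snd_mem _ h₁₁).2
  let x : Plane →ₗ[ℝ] ℝ := EuclideanSpace.projₗ 0
  let y : Plane →ₗ[ℝ] ℝ := EuclideanSpace.projₗ 1
  have hleft := openTriangle_subset (convex_halfSpace_le x.isLinear 0) (A := pt 0 0) (B := pt 0 b)
    (C := L) (le_refl (0 : ℝ)) (le_refl (0 : ℝ)) hL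
  have htop := openTriangle_subset (convex_halfSpace_ge y.isLinear b) (A := pt 0 b) (B := pt a b)
    (C := T) (le_refl b) (le_refl b) hT
  exact ⟨disjoint_openTriangle_of_lt (c := -a) (-x)
      (fun p hp ↦ neg_lt_neg ((hleft hp).trans_lt ha)) le_rfl le_rfl (neg_le_neg hR),
    disjoint_openTriangle_of_lt (c := 0) y (fun p hp ↦ hb.trans_le (htop hp)) le_rfl le_rfl hB⟩

lemma disjoint_adjacent_caps (ha : 0 < a) (hb : 0 < b) (hS : IsBoundingBox S L R B T)
    (h₀₀ : pt 0 0 ∈ S) (h₁₁ : pt a b ∈ S) (hL : L ∈ S) (hR : R ∈ S) (hB : B ∈ S) (hT : T ∈ S) :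
    Disjoint (openTriangle (pt 0 0) (pt 0 b) L) (openTriangle (pt 0 b) (pt a b) T) ∧
    Disjoint (openTriangle (pt 0 b) (pt a b) T) (openTriangle (pt a b) (pt a 0) R) ∧
    Disjoint (openTriangle (pt a b) (pt a 0) R) (openTriangle (pt a 0) (pt 0 0) B) ∧
    Disjoint (openTriangle (pt 0 0) (pt 0 b) L) (openTriangle (pt a 0) (pt 0 0) B) := by
  have hL₀ : L 0 ≤ 0 := (hS.fst_mem _ h₀₀).1
  have hR₀ : a ≤ R 0 := (hS.fst_mem _ h₁₁).2
  have hB₀ : B 1 ≤ 0 := (hS.snd_mem _ h₀₀).1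
  have hT₀ : b ≤ T 1 := (hS.snd_mem _ h₁₁).2
  obtain ⟨hBL, hTL⟩ := hS.snd_mem L hL
  obtain ⟨hBR, hTR⟩ := hS.snd_mem R hR
  obtain ⟨hLB, hRB⟩ := hS.fst_mem B hB
  obtain ⟨hLT, hRT⟩ := hS.fst_mem T hT
  let x : Plane →ₗ[ℝ] ℝ := EuclideanSpace.projₗ 0
  let y : Plane →ₗ[ℝ] ℝ := EuclideanSpace.projₗ 1
  exact ⟨
    disjoint_openTriangle_of_corner (-x) y (by simp [x]) (by simpa [y]) (by simp [y])
      (by simpa [x]) (by simpa [x]) (by simpa [y]) (by simpa [x]) (by simpa [y]),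
    disjoint_openTriangle_of_corner y x (by simp [y]) (by simpa [x]) (by simp [x])
      (by simpa [y]) (by simpa [y]) (by simpa [x]) (by simpa [y]) (by simpa [x]),
    disjoint_openTriangle_of_corner x (-y) (by simp [x]) (by simpa [y]) (by simp [y])
      (by simpa [x]) (by simpa [x]) (by simpa [y]) (by simpa [x]) (by simpa [y]),
    (disjoint_openTriangle_of_corner (-y) (-x) (by simp [y]) (by simpa [x]) (by simp [x])
      (by simpa [y]) (by simpa [y]) (by simpa [x]) (by simpa [y]) (by simpa [x])).symm⟩

lemma ofReal_bounding_box_le_volume {K : Set Plane} (hK : Convex ℝ K) (ha : 0 < a) (hb : 0 < b)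
    (h₁₀ : pt a 0 ∈ K) (h₀₁ : pt 0 b ∈ K) (hSK : S ⊆ K) (hS : IsBoundingBox S L R B T)
    (h₀₀ : pt 0 0 ∈ S) (h₁₁ : pt a b ∈ S) (hL : L ∈ S) (hR : R ∈ S) (hB : B ∈ S) (hT : T ∈ S) :
    ENNReal.ofReal ((b * (R 0 - L 0) + a * (T 1 - B 1)) / 2) ≤ volume K := by
  obtain ⟨h_left, h_top, h_right, h_bottom⟩ := disjoint_openRectangle_caps hS h₀₀ h₁₁
  obtain ⟨h_left_right, h_top_bottom⟩ := disjoint_opposite_caps ha hb hS h₀₀ h₁₁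
  obtain ⟨h_left_top, h_top_right, h_right_bottom, h_left_bottom⟩ :=
    disjoint_adjacent_caps ha hb hS h₀₀ h₁₁ hL hR hB hT
  calc
    ENNReal.ofReal ((b * (R 0 - L 0) + a * (T 1 - B 1)) / 2)
      = ENNReal.ofReal (a * b + planeDet (pt 0 b - pt 0 0) (L - pt 0 0) / 2
          + planeDet (pt a b - pt 0 b) (T - pt 0 b) / 2
          + planeDet (pt a 0 - pt a b) (R - pt a b) / 2
          + planeDet (pt 0 0 - pt a 0) (B - pt a 0) / 2) := by
        congr 1
        simp only [planeDet_apply, PiLp.sub_apply, pt_apply_zero, pt_apply_one]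
        ring
    _ ≤ volume (openRectangle a b) + volume (openTriangle (pt 0 0) (pt 0 b) L)
          + volume (openTriangle (pt 0 b) (pt a b) T)
          + volume (openTriangle (pt a b) (pt a 0) R)
          + volume (openTriangle (pt a 0) (pt 0 0) B) := by
        repeat grw [ENNReal.ofReal_add_le]
        grw [volume_openRectangle ha.le, ofReal_planeDet_div_two_le_volume_openTriangle,
          ofReal_planeDet_div_two_le_volume_openTriangle,
          ofReal_planeDet_div_two_le_volume_openTriangle,
          ofReal_planeDet_div_two_le_volume_openTriangle]
    _ = volume (openRectangle a b ∪ openTriangle (pt 0 0) (pt 0 b) L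
          ∪ openTriangle (pt 0 b) (pt a b) T ∪ openTriangle (pt a b) (pt a 0) R
          ∪ openTriangle (pt a 0) (pt 0 0) B) := by
        repeat rw [measure_union_of_convex volume (convex_openTriangle _ _ _)
          (by simp [*])]
    _ ≤ volume K := measure_mono <| by
        simp only [union_subset_iff]
        have h₀₀' := hSK h₀₀
        have h₁₁' := hSK h₁₁
        exact ⟨⟨⟨⟨openRectangle_subset hK h₀₀' h₁₀ h₀₁ h₁₁',
          openTriangle_subset hK h₀₀' h₀₁ (hSK hL)⟩, openTriangle_subset hK h₀₁ h₁₁' (hSK hT)⟩,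
          openTriangle_subset hK h₁₁' h₁₀ (hSK hR)⟩, openTriangle_subset hK h₁₀ h₀₀' (hSK hB)⟩

end Caps

/-- Rectangle case of the monotonicity of mixed area: the mixed area of an `a × b` rectangle and a
body with bounding box of width `w` and height `h` is `(b * w + a * h) / 2`. -/
lemma ofReal_rectangle_extents_le_volume {K : Set Plane} (hK : Convex ℝ K) {a b : ℝ} (ha : 0 < a)
    (hb : 0 < b) (h₀₀ : pt 0 0 ∈ K) (h₁₀ : pt a 0 ∈ K) (h₀₁ : pt 0 b ∈ K) (h₁₁ : pt a b ∈ K)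
    {A B C D : Plane} (hA : A ∈ K) (hB : B ∈ K) (hC : C ∈ K) (hD : D ∈ K) :
    ENNReal.ofReal ((b * |B 0 - A 0| + a * |D 1 - C 1|) / 2) ≤ volume K := by
  let S : Set Plane := {pt 0 0, pt a b, A, B, C, D}
  have hSK : S ⊆ K := by simp [S, insert_subset_iff, *]
  have hmem : pt 0 0 ∈ S ∧ pt a b ∈ S ∧ A ∈ S ∧ B ∈ S ∧ C ∈ S ∧ D ∈ S := by simp [S]
  obtain ⟨h₀₀', h₁₁', hA', hB', hC', hD'⟩ := hmem
  obtain ⟨l, hl, r, hr, m, hm, t, ht, hS⟩ := exists_isBoundingBox S.toFinite ⟨_, h₀₀'⟩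
  have hwidth : |B 0 - A 0| ≤ r 0 - l 0 :=
    Real.dist_le_of_mem_Icc (hS.fst_mem B hB') (hS.fst_mem A hA')
  have hheight : |D 1 - C 1| ≤ t 1 - m 1 :=
    Real.dist_le_of_mem_Icc (hS.snd_mem D hD') (hS.snd_mem C hC')
  grw [hwidth, hheight]
  exact ofReal_bounding_box_le_volume hK ha hb h₁₀ h₀₁ hSK hS h₀₀' h₁₁' hl hr hm ht

/-! ### Three unit vectors at angles of 120° -/

/-- `(x i, y i)` are the three vertices of an equilateral triangle inscribed in the unit circle;
these are the directed sides, scaled to length one, of an equilateral triangle. -/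
structure IsUnitTriad (x y : Fin 3 → ℝ) : Prop where
  sq_add_sq : ∀ i, x i ^ 2 + y i ^ 2 = 1
  sum_fst : ∑ i, x i = 0
  sum_snd : ∑ i, y i = 0

namespace IsUnitTriad

variable {x y : Fin 3 → ℝ}

lemma swap (h : IsUnitTriad x y) : IsUnitTriad y x :=
  ⟨fun i ↦ by rw [add_comm, h.sq_add_sq], h.sum_snd, h.sum_fst⟩

lemma rotate (h : IsUnitTriad x y) {c σ : ℝ} (hcσ : c ^ 2 + σ ^ 2 = 1) :
    IsUnitTriad (fun i ↦ c * x i + σ * y i) (fun i ↦ c * y i - σ * x i) where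
  sq_add_sq i := by linear_combination (c ^ 2 + σ ^ 2) * h.sq_add_sq i + hcσ
  sum_fst := by simp [Finset.sum_add_distrib, ← Finset.mul_sum, h.sum_fst, h.sum_snd]
  sum_snd := by simp [← Finset.mul_sum, h.sum_fst, h.sum_snd]

lemma fst_add_add (h : IsUnitTriad x y) (i : Fin 3) : x i + x (i + 1) + x (i + 2) = 0 := by
  have hx := h.sum_fst
  rw [Fin.sum_univ_three] at hx
  fin_cases i <;> simp only [Fin.reduceFinMk, Fin.reduceAdd] <;> linarith

lemma fst_sq_eq (h : IsUnitTriad x y) (i : Fin 3) :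
    x i ^ 2 = 3 / 4 + x (i + 1) * x (i + 2) := by
  have hx := h.fst_add_add i
  have hy := h.swap.fst_add_add i
  have h₀ := h.sq_add_sq i
  have h₁ := h.sq_add_sq (i + 1)
  have h₂ := h.sq_add_sq (i + 2)
  obtain ⟨hx, hy⟩ : x i = -x (i + 1) - x (i + 2) ∧ y i = -y (i + 1) - y (i + 2) :=
    ⟨by linarith, by linarith⟩
  have hinner : x (i + 1) * x (i + 2) + 1 / 2 = -(y (i + 1) * y (i + 2)) := by
    rw [hx, hy] at h₀
    linarith
  have hsq : (x (i + 1) * x (i + 2) + 1 / 2) ^ 2 = (1 - x (i + 1) ^ 2) * (1 - x (i + 2) ^ 2) := by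
    rw [hinner, ← eq_sub_of_add_eq' h₁, ← eq_sub_of_add_eq' h₂]
    ring
  rw [hx]
  linear_combination hsq

lemma exists_three_quarters_le_sq (h : IsUnitTriad x y) : ∃ i, 3 / 4 ≤ x i ^ 2 := by
  by_contra! hlt
  have hneg (i : Fin 3) : x (i + 1) * x (i + 2) < 0 := by linarith [hlt i, h.fst_sq_eq i]
  have hprod := mul_neg_of_pos_of_neg (mul_pos_of_neg_of_neg (hneg 0) (hneg 1)) (hneg 2)
  simp only [Fin.reduceAdd] at hprod
  nlinarith [sq_nonneg (x 0 * x 1 * x 2)]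

lemma abs_add_sqrt_three_mul_abs (h : IsUnitTriad x y) (i : Fin 3) :
    |y i| + √3 * |x i| = 2 * max |y (i + 1)| |y (i + 2)| := by
  have hsum : y i = -(y (i + 1) + y (i + 2)) := by linarith [h.swap.fst_add_add i]
  have hdiff : √3 * |x i| = |y (i + 1) - y (i + 2)| := by
    rw [← sqrt_sq_eq_abs, ← sqrt_sq_eq_abs, ← sqrt_mul zero_le_three]
    congr 1
    linear_combination 3 * h.sq_add_sq i - 4 * h.swap.fst_sq_eq i +
      (y i - (y (i + 1) + y (i + 2))) * hsum
  rw [hdiff, hsum, abs_neg]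
  grind [abs_cases]

end IsUnitTriad

lemma sqrt_three_mem_Ioo : √3 ∈ Ioo (1.7320508 : ℝ) 1.7320509 :=
  ⟨lt_sqrt_of_sq_lt (by norm_num), (sqrt_lt' (by norm_num)).2 (by norm_num)⟩

lemma abs_mul_sub_abs_mul_le {w : ℝ} (hw : 0 ≤ w) (c σ a b : ℝ) :
    |a| * (|σ| + w * |c|) - |b| * |(|c| - w * |σ|)| ≤ |σ * a + c * b| + w * |c * a - σ * b| := by
  have key (c σ b : ℝ) :
      |a| * (σ + w * c) - |b| * |c - w * σ| ≤ |σ * a + c * b| + w * |c * a - σ * b| :=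
    calc |a| * (σ + w * c) - |b| * |c - w * σ|
      _ ≤ |a| * |σ + w * c| - |b| * |c - w * σ| := by gcongr; exact le_abs_self _
      _ = |a * (σ + w * c)| - |-(b * (c - w * σ))| := by rw [abs_neg, abs_mul, abs_mul]
      _ ≤ |a * (σ + w * c) - -(b * (c - w * σ))| := abs_sub_abs_le_abs_sub _ _
      _ = |(σ * a + c * b) + w * (c * a - σ * b)| := by ring_nf
      _ ≤ |σ * a + c * b| + |w * (c * a - σ * b)| := abs_add_le _ _
      _ = |σ * a + c * b| + w * |c * a - σ * b| := by rw [abs_mul, abs_of_nonneg hw]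
  have hneg (p q : ℝ) : |-p - q| = |p + q| := by rw [← abs_neg]; ring_nf
  have hneg' (p q : ℝ) : |-p + q| = |p - q| := by rw [← abs_neg]; ring_nf
  rcases abs_choice c with hc | hc <;> rcases abs_choice σ with hσ | hσ <;> rw [hc, hσ]
  · exact key c σ b
  · simpa [hneg, hneg'] using key c (-σ) (-b)
  · simpa [hneg, hneg'] using key (-c) σ (-b)
  · simpa [hneg, hneg'] using key (-c) (-σ) b

/-- `0.0959196` is the smaller root of `b + √3 * √(1 - b ^ 2) = 8 * 0.227498`, rounded up; it is
about `sin 5.5°`. -/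
lemma unitVector_abs_snd_lt {a b : ℝ} (hab : a ^ 2 + b ^ 2 = 1)
    (ha : 3 / 4 ≤ a ^ 2) (h : |b| + √3 * |a| < 8 * 0.227498) : |b| < 0.0959196 := by
  have hsqrt : √3 ^ 2 = 3 := sq_sqrt zero_le_three
  have hb : |b| ^ 2 = 1 - |a| ^ 2 := by rw [sq_abs, sq_abs, ← hab]; ring
  have hb_half : |b| ≤ 1 / 2 := by
    rw [← sq_abs a] at ha
    nlinarith [abs_nonneg b]
  by_contra! hb_large
  have hlt : (√3 * |a|) ^ 2 < (8 * 0.227498 - |b|) ^ 2 := by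
    gcongr
    linarith
  have heq : (√3 * |a|) ^ 2 = 3 * (1 - |b| ^ 2) := by
    rw [mul_pow, hsqrt, hb]
    ring
  nlinarith [mul_nonneg (sub_nonneg.2 hb_large) (sub_nonneg.2 hb_half)]

lemma unitVector_le_abs_fst {a b : ℝ} (hab : a ^ 2 + b ^ 2 = 1) (hb : |b| ≤ 0.0959196) :
    0.995389 ≤ |a| := by
  have hb' : b ^ 2 ≤ 0.0959196 ^ 2 := sq_le_sq.2 (hb.trans (le_abs_self _))
  have ha : (0.995389 : ℝ) ^ 2 ≤ a ^ 2 := by linarith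
  exact (le_abs_self _).trans (sq_le_sq.1 ha)

section UnitVector

variable {c σ : ℝ}

/-- `0.49755634` is the smaller root of `√(1 - σ ^ 2) + σ = 6 * 0.227498`, rounded up; it is about
`sin 29.8°`. -/
lemma unitVector_snd_le_of_add_lt (hσc : σ ≤ c) (hcσ : c ^ 2 + σ ^ 2 = 1)
    (hsum : c + σ < 6 * 0.227498) : σ ≤ 0.49755634 := by
  by_contra! hlt
  have hsq : c ^ 2 < (6 * 0.227498 - σ) ^ 2 := by
    gcongr <;> linarith
  have hσ_half : σ ≤ 3 * 0.227498 := by linarith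
  nlinarith [mul_nonneg (sub_nonneg.2 hlt.le) (sub_nonneg.2 hσ_half)]

lemma unitVector_le_fst_of_snd_le (hc : 0 ≤ c) (hσ : 0 ≤ σ) (hcσ : c ^ 2 + σ ^ 2 = 1)
    (hσ_le : σ ≤ 0.49755634) : 0.8674 ≤ c := by
  have hσ_sq : σ ^ 2 ≤ 0.49755634 ^ 2 := by gcongr
  refine le_of_sq_le_sq ?_ hc
  linarith

/-- The chord of the unit circle from the point `σ = 0` to the point `σ = 0.49755634` has slope
`-0.266439`, up to rounding. -/
lemma unitVector_chord_le_fst (hc : 0 ≤ c) (hσ : 0 ≤ σ) (hcσ : c ^ 2 + σ ^ 2 = 1)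
    (hσ_le : σ ≤ 0.49755634) : 1 - 0.266439 * σ ≤ c := by
  have hchord : 0 ≤ σ * (2 * 0.266439 - (1 + 0.266439 ^ 2) * σ) :=
    mul_nonneg hσ (by linarith)
  refine le_of_sq_le_sq ?_ hc
  linarith

lemma unitVector_six_mul_le (hσ : 0 ≤ σ) (hσc : σ ≤ c) (hcσ : c ^ 2 + σ ^ 2 = 1)
    (hsum : c + σ < 6 * 0.227498) {α β : ℝ} (hα : 0.995389 ≤ α) (hβ : β ≤ 0.0959196) :
    6 * 0.227498 ≤ c + (α * (σ + √3 * c) - β * |c - √3 * σ|) / 4 := by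
  obtain ⟨hsqrt, hsqrt'⟩ := sqrt_three_mem_Ioo
  have hc : 0 ≤ c := hσ.trans hσc
  have hσ_le := unitVector_snd_le_of_add_lt hσc hcσ hsum
  have hc_le := unitVector_le_fst_of_snd_le hc hσ hcσ hσ_le
  have hchord := unitVector_chord_le_fst hc hσ hcσ hσ_le
  have hpos : 0 ≤ c - √3 * σ := by
    have : √3 * σ ≤ 1.7320509 * 0.49755634 := by gcongr
    linarith
  rw [abs_of_nonneg hpos]
  calc 6 * 0.227498
    _ ≤ c + (0.995389 * (σ + 1.7320508 * c) - 0.0959196 * (c - 1.7320508 * σ)) / 4 := by linarith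
    _ ≤ c + (0.995389 * (σ + √3 * c) - 0.0959196 * (c - √3 * σ)) / 4 := by gcongr
    _ ≤ c + (α * (σ + √3 * c) - β * (c - √3 * σ)) / 4 := by gcongr

end UnitVector

lemma IsUnitTriad.le_of_abs_le_abs {x y : Fin 3 → ℝ} (h : IsUnitTriad x y) {c σ V : ℝ}
    (hcσ : c ^ 2 + σ ^ 2 = 1) (hσc : |σ| ≤ |c|) (hsum : |c| + |σ| ≤ 6 * V)
    (hdet : ∀ i, |c * y i - σ * x i| ≤ 4 * V) (hext : ∀ i, |c| + |y i| / 2 ≤ 6 * V) :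
    0.227498 ≤ V := by
  by_contra! hV
  have hrot := h.rotate hcσ
  obtain ⟨i, hi⟩ := hrot.exists_three_quarters_le_sq
  -- `a` and `b` are the components of `(x i, y i)` along and across `(c, σ)`.
  set a := c * x i + σ * y i
  set b := c * y i - σ * x i
  have hx : x i = c * a - σ * b := by linear_combination (-x i) * hcσ
  have hy : y i = σ * a + c * b := by linear_combination (-y i) * hcσ
  have hab : a ^ 2 + b ^ 2 = 1 := hrot.sq_add_sq i
  have hdet_max : |b| + √3 * |a| < 8 * 0.227498 := by
    have := hrot.abs_add_sqrt_three_mul_abs i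
    have := max_le (hdet (i + 1)) (hdet (i + 2))
    linarith
  have hext_max : |y i| + √3 * |x i| ≤ 4 * (6 * V - |c|) := by
    have := h.abs_add_sqrt_three_mul_abs i
    have : max |y (i + 1)| |y (i + 2)| ≤ 2 * (6 * V - |c|) :=
      max_le (by linarith [hext (i + 1)]) (by linarith [hext (i + 2)])
    linarith
  have hb_lt : |b| < 0.0959196 := unitVector_abs_snd_lt hab hi hdet_max
  have hlower := unitVector_six_mul_le (abs_nonneg σ) hσc (by rwa [sq_abs, sq_abs])
    (hsum.trans_lt (by linarith)) (unitVector_le_abs_fst hab hb_lt.le) hb_lt.le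
  have hdecomp := abs_mul_sub_abs_mul_le (sqrt_nonneg 3) c σ a b
  rw [← hx, ← hy] at hdecomp
  linarith

lemma IsUnitTriad.le_of_forall_abs_le {x y : Fin 3 → ℝ} (h : IsUnitTriad x y) {c σ V : ℝ}
    (hcσ : c ^ 2 + σ ^ 2 = 1) (hsum : |c| + |σ| ≤ 6 * V)
    (hdet : ∀ i, |c * y i - σ * x i| ≤ 4 * V) (hext_c : ∀ i, |c| + |y i| / 2 ≤ 6 * V)
    (hext_σ : ∀ i, |σ| + |x i| / 2 ≤ 6 * V) : 0.227498 ≤ V := by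
  rcases le_total |σ| |c| with hle | hle
  · exact h.le_of_abs_le_abs hcσ hle hsum hdet hext_c
  · exact h.swap.le_of_abs_le_abs (by rwa [add_comm]) hle (by rwa [add_comm])
      (fun i ↦ by rw [abs_sub_comm]; exact hdet i) hext_σ

lemma Plane.dist_sq_eq (p q : Plane) : dist p q ^ 2 = (q 0 - p 0) ^ 2 + (q 1 - p 1) ^ 2 := by
  rw [EuclideanSpace.dist_sq_eq, Fin.sum_univ_two, Real.dist_eq, Real.dist_eq, sq_abs, sq_abs]
  ring

lemma isUnitTriad_of_dist_eq {k l : ℝ} (hkl : k * l = 1) {v : Fin 3 → Plane}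
    (hv : ∀ i, dist (v i) (v (i + 1)) = l) :
    IsUnitTriad (fun i ↦ k * (v (i + 1) 0 - v i 0)) (fun i ↦ k * (v (i + 1) 1 - v i 1)) where
  sq_add_sq i := by
    have h := Plane.dist_sq_eq (v i) (v (i + 1))
    rw [hv] at h
    linear_combination -k ^ 2 * h + (k * l + 1) * hkl
  sum_fst := by
    simp only [Fin.sum_univ_three, Fin.reduceAdd]
    ring
  sum_snd := by
    simp only [Fin.sum_univ_three, Fin.reduceAdd]
    ring

lemma le_volume_of_square_segment_triangle {K : Set Plane} (hK : Convex ℝ K)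
    (h₀₀ : pt 0 0 ∈ K) (h₁₀ : pt (1 / 3) 0 ∈ K) (h₀₁ : pt 0 (1 / 3) ∈ K)
    (h₁₁ : pt (1 / 3) (1 / 3) ∈ K) {A B : Plane} (hA : A ∈ K) (hB : B ∈ K) (hAB : dist A B = 1)
    {v : Fin 3 → Plane} (hvK : ∀ i, v i ∈ K) (hv : ∀ i, dist (v i) (v (i + 1)) = 1 / 2) :
    ENNReal.ofReal 0.227498 ≤ volume K := by
  rcases eq_or_ne (volume K) ⊤ with htop | hfin
  · exact htop ▸ le_top
  rw [ENNReal.ofReal_le_iff_le_toReal hfin]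
  have hrect {P Q R S : Plane} (hP : P ∈ K) (hQ : Q ∈ K) (hR : R ∈ K) (hS : S ∈ K) :
      |Q 0 - P 0| + |S 1 - R 1| ≤ 6 * (volume K).toReal := by
    have := (ENNReal.ofReal_le_iff_le_toReal hfin).1 <| ofReal_rectangle_extents_le_volume hK
      (by norm_num) (by norm_num) h₀₀ h₁₀ h₀₁ h₁₁ hP hQ hR hS
    linarith
  have habs (r : ℝ) : |2 * r| / 2 = |r| := by
    rw [abs_mul, abs_two, mul_div_cancel_left₀ _ two_ne_zero]
  have htriad := isUnitTriad_of_dist_eq (mul_one_div_cancel two_ne_zero) hv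
  refine htriad.le_of_forall_abs_le (c := B 0 - A 0) (σ := B 1 - A 1)
    (by rw [← Plane.dist_sq_eq, hAB, one_pow]) (hrect hA hB hA hB)
    (fun i ↦ ?_) (fun i ↦ ?_) fun i ↦ ?_
  · have hdet := (ENNReal.ofReal_le_iff_le_toReal hfin).1 <|
      ofReal_abs_planeDet_div_two_le_volume hK hA hB (hvK i) (hvK (i + 1))
    calc |(B 0 - A 0) * (2 * (v (i + 1) 1 - v i 1)) - (B 1 - A 1) * (2 * (v (i + 1) 0 - v i 0))|
      _ = |2 * planeDet (B - A) (v (i + 1) - v i)| := by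
        simp only [planeDet_apply, PiLp.sub_apply]
        ring_nf
      _ ≤ 4 * (volume K).toReal := by
        rw [abs_mul, abs_two]
        linarith
  · simpa only [habs] using hrect hA hB (hvK i) (hvK (i + 1))
  · simpa only [habs, add_comm] using hrect (hvK i) (hvK (i + 1)) hA hB

/-! ### Arcs through given points -/

section Arcs

variable {E : Type*} [NormedAddCommGroup E] [NormedSpace ℝ E]

lemma eVariationOn_Icc_le_of_lipschitzWith {F : Type*} [PseudoEMetricSpace F] {f : ℝ → F}
    {C : NNReal} (hf : LipschitzWith C f) (a b : ℝ) :
    eVariationOn f (Icc a b) ≤ C * ENNReal.ofReal (b - a) :=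
  calc eVariationOn (f ∘ id) (Icc a b) ≤ C * eVariationOn id (Icc a b) :=
        (hf.lipschitzOnWith (s := univ)).comp_eVariationOn_le (mapsTo_univ _ _)
    _ = C * ENNReal.ofReal (b - a) := by rw [eVariationOn_id_Icc]

lemma lipschitzWith_one_append_ray {f : ℝ → E} (hf : LipschitzWith 1 f) {u : E} (hu : ‖u‖ ≤ 1)
    (T : ℝ) : LipschitzWith 1 fun t ↦ f (min t T) + max (t - T) 0 • u := by
  refine LipschitzWith.of_dist_le_mul fun s t ↦ ?_
  calc dist (f (min s T) + max (s - T) 0 • u) (f (min t T) + max (t - T) 0 • u)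
    _ ≤ dist (f (min s T)) (f (min t T)) + dist (max (s - T) 0 • u) (max (t - T) 0 • u) :=
      dist_add_add_le _ _ _ _
    _ ≤ |min s T - min t T| + |max (s - T) 0 - max (t - T) 0| := by
      gcongr
      · simpa [Real.dist_eq] using hf.dist_le_mul (min s T) (min t T)
      · rw [dist_eq_norm, ← sub_smul, norm_smul, Real.norm_eq_abs]
        exact mul_le_of_le_one_right (abs_nonneg _) hu
    _ = (1 : NNReal) * dist s t := by
      rw [Real.dist_eq, NNReal.coe_one, one_mul]
      grind [abs_cases]

lemma exists_lipschitzWith_one_forall_mem_image {n : ℕ} (p : Fin (n + 1) → E) :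
    ∃ f : ℝ → E, LipschitzWith 1 f ∧
      ∀ i, p i ∈ f '' Icc 0 (∑ j : Fin n, dist (p j.castSucc) (p j.succ)) := by
  suffices ∃ f : ℝ → E, LipschitzWith 1 f ∧
      f (∑ j : Fin n, dist (p j.castSucc) (p j.succ)) = p (Fin.last n) ∧
      ∀ i, p i ∈ f '' Icc 0 (∑ j : Fin n, dist (p j.castSucc) (p j.succ)) by
    obtain ⟨f, hf, -, hp⟩ := this
    exact ⟨f, hf, hp⟩
  induction n with
  | zero =>
    exact ⟨fun _ ↦ p 0, LipschitzWith.const' _, rfl,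
      fun i ↦ ⟨0, by simp, congrArg p (Fin.fin_one_eq_zero i).symm⟩⟩
  | succ n ih =>
    obtain ⟨f, hf, hlast, hmem⟩ := ih fun i ↦ p i.castSucc
    simp only [Fin.sum_univ_castSucc, Fin.succ_castSucc, Fin.succ_last]
    set T := ∑ j : Fin n, dist (p j.castSucc.castSucc) (p j.succ.castSucc)
    set v := p (Fin.last (n + 1)) - p (Fin.last n).castSucc with hv
    have hT : 0 ≤ T := Finset.sum_nonneg fun _ _ ↦ dist_nonneg
    have hend : f T + dist (p (Fin.last n).castSucc) (p (Fin.last (n + 1))) • ‖v‖⁻¹ • v =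
        p (Fin.last (n + 1)) := by
      have hsmul : ‖v‖ • ‖v‖⁻¹ • v = v := by
        rcases eq_or_ne v 0 with hv | hv
        · simp [hv]
        · exact smul_inv_smul₀ (norm_ne_zero_iff.2 hv) v
      rw [hlast, dist_comm, dist_eq_norm, ← hv, hsmul, hv, add_sub_cancel]
    refine ⟨fun t ↦ f (min t T) + max (t - T) 0 • ‖v‖⁻¹ • v,
      lipschitzWith_one_append_ray hf ?_ T, by simpa, Fin.lastCases ?_ fun i ↦ ?_⟩
    · simpa using inv_norm_smul_mem_unitClosedBall v
    · exact ⟨_, ⟨add_nonneg hT dist_nonneg, le_rfl⟩, by simpa⟩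
    · obtain ⟨t, ⟨ht₀, htT⟩, hft⟩ := hmem i
      exact ⟨t, ⟨ht₀, htT.trans (le_add_of_nonneg_right dist_nonneg)⟩, by simpa [htT]⟩

end Arcs

/-- `K` is a universal cover for arcs of length at most one: it contains an isometric copy of each
of them. The isometries are global, and reflections are allowed. -/
def IsUnitArcCover {E : Type*} [PseudoEMetricSpace E] (K : Set E) : Prop :=
  ∀ f : ℝ → E, ContinuousOn f (Icc 0 1) → eVariationOn f (Icc 0 1) ≤ 1 →
    ∃ φ : E ≃ᵢ E, φ '' (f '' Icc 0 1) ⊆ K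

namespace IsUnitArcCover

lemma preimage {E : Type*} [PseudoEMetricSpace E] {K : Set E} (hK : IsUnitArcCover K)
    (φ : E ≃ᵢ E) : IsUnitArcCover (φ ⁻¹' K) := by
  intro f hf hlength
  obtain ⟨ψ, hψ⟩ := hK f hf hlength
  refine ⟨ψ.trans φ.symm, ?_⟩
  rintro _ ⟨p, hp, rfl⟩
  simpa using hψ (mem_image_of_mem ψ hp)

lemma exists_isometryEquiv_forall_mem {E : Type*} [NormedAddCommGroup E] [NormedSpace ℝ E]
    {K : Set E} (hK : IsUnitArcCover K) {n : ℕ} (p : Fin (n + 1) → E)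
    (hp : ∑ j : Fin n, dist (p j.castSucc) (p j.succ) ≤ 1) : ∃ φ : E ≃ᵢ E, ∀ i, φ (p i) ∈ K := by
  obtain ⟨f, hf, hmem⟩ := exists_lipschitzWith_one_forall_mem_image p
  obtain ⟨φ, hφ⟩ := hK f hf.continuous.continuousOn
    (by simpa using eVariationOn_Icc_le_of_lipschitzWith hf 0 1)
  exact ⟨φ, fun i ↦ hφ (mem_image_of_mem φ (image_mono (Icc_subset_Icc_right hp) (hmem i)))⟩

variable {K : Set Plane}

lemma exists_square (hK : IsUnitArcCover K) :
    ∃ φ : Plane ≃ᵢ Plane, φ (pt 0 0) ∈ K ∧ φ (pt (1 / 3) 0) ∈ K ∧ φ (pt 0 (1 / 3)) ∈ K ∧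
      φ (pt (1 / 3) (1 / 3)) ∈ K := by
  obtain ⟨φ, hφ⟩ := hK.exists_isometryEquiv_forall_mem
    ![pt 0 0, pt (1 / 3) 0, pt (1 / 3) (1 / 3), pt 0 (1 / 3)] <| by
      rw [Fin.sum_univ_three]
      change dist (pt 0 0) (pt (1 / 3) 0) + dist (pt (1 / 3) 0) (pt (1 / 3) (1 / 3)) +
        dist (pt (1 / 3) (1 / 3)) (pt 0 (1 / 3)) ≤ 1
      norm_num [EuclideanSpace.dist_eq, Real.dist_eq]
  exact ⟨φ, hφ 0, hφ 1, hφ 3, hφ 2⟩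

lemma exists_segment (hK : IsUnitArcCover K) : ∃ A ∈ K, ∃ B ∈ K, dist A B = 1 := by
  have hdist : dist (pt 0 0) (pt 1 0) = 1 := by simp [EuclideanSpace.dist_eq]
  obtain ⟨φ, hφ⟩ := hK.exists_isometryEquiv_forall_mem ![pt 0 0, pt 1 0] (by simp [hdist])
  exact ⟨φ (pt 0 0), hφ 0, φ (pt 1 0), hφ 1, by rw [φ.dist_eq, hdist]⟩

lemma exists_triangle (hK : IsUnitArcCover K) :
    ∃ v : Fin 3 → Plane, (∀ i, v i ∈ K) ∧ ∀ i, dist (v i) (v (i + 1)) = 1 / 2 := by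
  let p : Fin 3 → Plane := ![pt 0 0, pt (1 / 2) 0, pt (1 / 4) (√3 / 4)]
  have hdist (i : Fin 3) : dist (p i) (p (i + 1)) = 1 / 2 := by
    rw [← sq_eq_sq₀ dist_nonneg (by norm_num), Plane.dist_sq_eq]
    fin_cases i <;> simp [p, div_pow] <;> norm_num
  obtain ⟨φ, hφ⟩ := hK.exists_isometryEquiv_forall_mem p <| by
    rw [Fin.sum_univ_two]
    exact (congrArg₂ (· + ·) (hdist 0) (hdist 1)).trans_le (by norm_num)
  exact ⟨φ ∘ p, hφ, fun i ↦ (φ.dist_eq _ _).trans (hdist i)⟩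

end IsUnitArcCover

lemma convex_preimage_isometryEquiv {E F : Type*} [NormedAddCommGroup E] [NormedSpace ℝ E]
    [NormedAddCommGroup F] [NormedSpace ℝ F] {K : Set F} (hK : Convex ℝ K) (φ : E ≃ᵢ F) :
    Convex ℝ (φ ⁻¹' K) :=
  hK.affine_preimage φ.toRealAffineIsometryEquiv.toAffineEquiv.toAffineMap

lemma volume_preimage_isometryEquiv {n : ℕ}
    (φ : EuclideanSpace ℝ (Fin n) ≃ᵢ EuclideanSpace ℝ (Fin n))
    (K : Set (EuclideanSpace ℝ (Fin n))) : volume (φ ⁻¹' K) = volume K := by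
  have hφ : MeasurePreserving φ := by
    simpa only [EuclideanSpace.euclideanHausdorffMeasure_eq_volume] using
      φ.measurePreserving_euclideanHausdorffMeasure n
  exact hφ.measure_preimage_emb φ.toHomeomorph.measurableEmbedding K

theorem universal_cover_lower_bound (K : Set (EuclideanSpace ℝ (Fin 2)))
    (hK : Convex ℝ K)
    (hcover : ∀ f : ℝ → EuclideanSpace ℝ (Fin 2),
      ContinuousOn f (Set.Icc 0 1) → eVariationOn f (Set.Icc 0 1) ≤ 1 →
      ∃ φ : EuclideanSpace ℝ (Fin 2) ≃ᵢ EuclideanSpace ℝ (Fin 2),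
        φ '' (f '' Set.Icc 0 1) ⊆ K) :
    ENNReal.ofReal 0.227498 ≤ volume K := by
  have hcover : IsUnitArcCover K := hcover
  obtain ⟨φ, h₀₀, h₁₀, h₀₁, h₁₁⟩ := hcover.exists_square
  obtain ⟨A, hA, B, hB, hAB⟩ := (hcover.preimage φ).exists_segment
  obtain ⟨v, hvK, hv⟩ := (hcover.preimage φ).exists_triangle
  rw [← volume_preimage_isometryEquiv φ K]
  exact le_volume_of_square_segment_triangle (convex_preimage_isometryEquiv hK φ) h₀₀ h₁₀ h₀₁ h₁₁
    hA hB hAB hvK hv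
end

section
/- If π/3 ≤ β ≤ 2π/3, then μ(x₁,y₁,α,x₂,y₂,β) ≥ max{(1/4)·sin(β − π/6), (1/4)·sin(β + π/6)}, for all real x₁, y₁, α, x₂, y₂. -/
open Real MeasureTheory

/-!
If a convex set `K` of the plane contains `a`, `b` and `p`, then the parallelogram spanned by
`b - a` and `p - a` is covered by a translate of `K` and a translate of `-K`, since a diagonal cuts
it into a translate of the triangle `abp` and a point reflection of that triangle. Hence the
parallelogram has area at most twice that of `K`. Applied to the two pieces into which the line `ab`
cuts `K`, with `p` in one and `q` in the other, this bounds twice the area of `K` below by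
`ω (b - a) (p - q)`, where `ω` is the area form; if `p` or `q` lies on the wrong side of the line,
its contribution to the bound is negative and can be dropped. For `a = E` and `b = F` the bound is
the difference in height of `p` and `q`, which is then taken along two sides of the triangle `T`.
-/

section HyperplaneSplitting

open Module

variable {V : Type*} [NormedAddCommGroup V] [NormedSpace ℝ V] [FiniteDimensional ℝ V]
  [MeasurableSpace V] [BorelSpace V] (μ : Measure V) [μ.IsAddHaarMeasure] {f : Dual ℝ V}

lemma addHaar_setOf_dual_apply_eq (hf : f ≠ 0) (r : ℝ) : μ {x | f x = r} = 0 := by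
  obtain ⟨a, rfl⟩ := f.surjective hf r
  have hlevel : {x | f x = f a} = (· + -a) ⁻¹' (LinearMap.ker f : Set V) := by
    ext x
    simp [add_neg_eq_zero]
  rw [hlevel, measure_preimage_add_right]
  exact Measure.addHaar_submodule μ _ (mt LinearMap.ker_eq_top.mp hf)

lemma addHaar_inter_halfSpace_ge_add_inter_halfSpace_le (hf : f ≠ 0) (r : ℝ) (s : Set V) :
    μ (s ∩ {x | r ≤ f x}) + μ (s ∩ {x | f x ≤ r}) = μ s := by
  have hmeas : MeasurableSet {x | r ≤ f x} :=
    measurableSet_le measurable_const f.continuous_of_finiteDimensional.measurable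
  have hne : ∀ᵐ x ∂μ, f x ≠ r := measure_eq_zero_iff_ae_notMem.mp
    (addHaar_setOf_dual_apply_eq μ hf r)
  have hdiff : (s ∩ {x | f x ≤ r} : Set V) =ᵐ[μ] (s \ {x | r ≤ f x} : Set V) := by
    filter_upwards [hne] with x hx
    exact propext (and_congr_right fun _ ↦ by simp [le_iff_lt_or_eq, hx, hx.symm])
  rw [measure_congr hdiff, measure_inter_add_sdiff s hmeas]

end HyperplaneSplitting

section Parallelogram

variable {V : Type*} [AddCommGroup V] [Module ℝ V]

lemma mem_parallelepiped_pair {u v x : V} : x ∈ parallelepiped ![u, v] ↔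
    ∃ s ∈ Set.Icc (0 : ℝ) 1, ∃ t ∈ Set.Icc (0 : ℝ) 1, x = s • u + t • v := by
  rw [mem_parallelepiped_iff]
  constructor
  · rintro ⟨w, ⟨hw0, hw1⟩, rfl⟩
    exact ⟨w 0, ⟨hw0 0, hw1 0⟩, w 1, ⟨hw0 1, hw1 1⟩, Fin.sum_univ_two _⟩
  · rintro ⟨s, hs, t, ht, rfl⟩
    refine ⟨![s, t], ?_, (Fin.sum_univ_two fun i ↦ ![s, t] i • ![u, v] i).symm⟩
    simp [Pi.le_def, Fin.forall_fin_two, hs.1, hs.2, ht.1, ht.2]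

lemma add_smul_sub_add_smul_sub_mem {K : Set V} (hK : Convex ℝ K) {a b c : V} (ha : a ∈ K)
    (hb : b ∈ K) (hc : c ∈ K) {s t : ℝ} (hs : 0 ≤ s) (ht : 0 ≤ t) (hst : s + t ≤ 1) :
    a + s • (b - a) + t • (c - a) ∈ K := by
  have hr : 0 ≤ 1 - s - t := by linarith
  have hmem : ∑ i, ![1 - s - t, s, t] i • ![a, b, c] i ∈ K :=
    hK.sum_mem (by simp [Fin.forall_fin_succ, *])
      (by simp only [Fin.sum_univ_three, Matrix.cons_val]; ring) (by simp [Fin.forall_fin_succ, *])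
  convert hmem using 1
  simp only [Fin.sum_univ_three, Matrix.cons_val]
  module

lemma add_mem_or_sub_mem_of_mem_parallelepiped {K : Set V} (hK : Convex ℝ K) {a b c x : V}
    (ha : a ∈ K) (hb : b ∈ K) (hc : c ∈ K) (hx : x ∈ parallelepiped ![b - a, c - a]) :
    a + x ∈ K ∨ b + c - a - x ∈ K := by
  obtain ⟨s, hs, t, ht, rfl⟩ := mem_parallelepiped_pair.mp hx
  rcases le_total (s + t) 1 with hst | hst
  · left
    convert add_smul_sub_add_smul_sub_mem hK ha hb hc hs.1 ht.1 hst using 1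
    module
  · right
    convert add_smul_sub_add_smul_sub_mem hK ha hb hc (sub_nonneg.mpr hs.2)
      (sub_nonneg.mpr ht.2) (by linarith) using 1
    module

end Parallelogram

section AreaForm

open Module

attribute [local instance] FiniteDimensional.of_fact_finrank_eq_two

variable {V : Type*} [NormedAddCommGroup V] [InnerProductSpace ℝ V] [Fact (finrank ℝ V = 2)]
  (o : Orientation ℝ V (Fin 2)) {K : Set V} {a b c p q : V}

lemma areaForm_ne_zero {u : V} (hu : u ≠ 0) : o.areaForm u ≠ 0 := fun h ↦ by
  simpa [hu] using LinearMap.congr_fun h (o.rightAngleRotation u)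

lemma areaForm_sub_apply_left_eq_right (a b : V) :
    o.areaForm (b - a) a = o.areaForm (b - a) b := by
  rw [← sub_eq_zero, ← neg_sub (o.areaForm _ b), ← map_sub, o.areaForm_apply_self, neg_zero]

variable [MeasurableSpace V] [BorelSpace V]

lemma volume_parallelepiped_pair (u v : V) :
    volume (parallelepiped ![u, v]) = ENNReal.ofReal |o.areaForm u v| := by
  rw [← o.measure_eq_volume, AlternatingMap.measure_parallelepiped, o.areaForm_to_volumeForm]

lemma ofReal_abs_areaForm_le_two_mul_volume (hK : Convex ℝ K) (ha : a ∈ K) (hb : b ∈ K)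
    (hc : c ∈ K) : ENNReal.ofReal |o.areaForm (b - a) (c - a)| ≤ 2 * volume K := by
  calc ENNReal.ofReal |o.areaForm (b - a) (c - a)|
      = volume (parallelepiped ![b - a, c - a]) := (volume_parallelepiped_pair o _ _).symm
    _ ≤ volume ((a + ·) ⁻¹' K ∪ (b + c - a - ·) ⁻¹' K) :=
        measure_mono fun x hx ↦ add_mem_or_sub_mem_of_mem_parallelepiped hK ha hb hc hx
    _ ≤ volume ((a + ·) ⁻¹' K) + volume ((b + c - a - ·) ⁻¹' K) := measure_union_le _ _
    _ = 2 * volume K := by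
        rw [measure_preimage_add, (Measure.measurePreserving_sub_left volume _).measure_preimage
          (hK.nullMeasurableSet volume), two_mul]

lemma ofReal_areaForm_le_two_mul_volume_inter_halfSpace (hK : Convex ℝ K) (ha : a ∈ K)
    (hb : b ∈ K) (hc : c ∈ K) : ENNReal.ofReal (o.areaForm (b - a) (c - a)) ≤
      2 * volume (K ∩ {x | o.areaForm (b - a) a ≤ o.areaForm (b - a) x}) := by
  rcases le_total (o.areaForm (b - a) (c - a)) 0 with hneg | hpos
  · rw [ENNReal.ofReal_of_nonpos hneg]
    exact zero_le
  · rw [← abs_of_nonneg hpos]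
    rw [map_sub, sub_nonneg] at hpos
    exact ofReal_abs_areaForm_le_two_mul_volume o
      (hK.inter (convex_halfSpace_ge (o.areaForm (b - a)).isLinear _))
      ⟨ha, le_refl (o.areaForm (b - a) a)⟩
      ⟨hb, (areaForm_sub_apply_left_eq_right o a b).le⟩ ⟨hc, hpos⟩

lemma ofReal_areaForm_sub_sub_le_two_mul_volume (hK : Convex ℝ K) (ha : a ∈ K) (hb : b ∈ K)
    (hp : p ∈ K) (hq : q ∈ K) :
    ENNReal.ofReal (o.areaForm (b - a) (p - q)) ≤ 2 * volume K := by
  rcases eq_or_ne a b with rfl | hab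
  · simp
  set f := o.areaForm (b - a) with hf
  have hfab : f a = f b := areaForm_sub_apply_left_eq_right o a b
  have hf_neg : o.areaForm (a - b) = -f := by rw [hf, ← map_neg, neg_sub]
  have above : ENNReal.ofReal (f (p - a)) ≤ 2 * volume (K ∩ {x | f a ≤ f x}) :=
    ofReal_areaForm_le_two_mul_volume_inter_halfSpace o hK ha hb hp
  have below : ENNReal.ofReal (f (a - q)) ≤ 2 * volume (K ∩ {x | f x ≤ f a}) := by
    simpa [hf_neg, hfab] using
      ofReal_areaForm_le_two_mul_volume_inter_halfSpace o hK hb ha hq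
  calc ENNReal.ofReal (f (p - q))
      = ENNReal.ofReal (f (p - a) + f (a - q)) := by rw [← map_add, sub_add_sub_cancel]
    _ ≤ ENNReal.ofReal (f (p - a)) + ENNReal.ofReal (f (a - q)) := ENNReal.ofReal_add_le
    _ ≤ 2 * volume (K ∩ {x | f a ≤ f x}) + 2 * volume (K ∩ {x | f x ≤ f a}) :=
        add_le_add above below
    _ = 2 * volume K := by
        rw [← mul_add, addHaar_inter_halfSpace_ge_add_inter_halfSpace_le volume
          (areaForm_ne_zero o (sub_ne_zero.mpr hab.symm))]

lemma ofReal_abs_areaForm_sub_sub_le_two_mul_volume (hK : Convex ℝ K) (ha : a ∈ K) (hb : b ∈ K)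
    (hp : p ∈ K) (hq : q ∈ K) :
    ENNReal.ofReal |o.areaForm (b - a) (p - q)| ≤ 2 * volume K := by
  rcases abs_choice (o.areaForm (b - a) (p - q)) with h | h <;> rw [h]
  · exact ofReal_areaForm_sub_sub_le_two_mul_volume o hK ha hb hp hq
  · rw [← map_neg, neg_sub]
    exact ofReal_areaForm_sub_sub_le_two_mul_volume o hK ha hb hq hp

end AreaForm

section Configuration

open scoped EuclideanSpace

lemma abs_areaForm_pt_sub_pt (o : Orientation ℝ (EuclideanSpace ℝ (Fin 2)) (Fin 2))
    (v : EuclideanSpace ℝ (Fin 2)) : |o.areaForm (pt 1 0 - pt 0 0) v| = |v 1| := by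
  rw [o.areaForm_to_volumeForm, o.volumeForm_robust' (EuclideanSpace.basisFun (Fin 2) ℝ)]
  simp [Module.Basis.det_apply, Matrix.det_fin_two, pt, Module.Basis.toMatrix]

lemma finite_config (x1 y1 a x2 y2 b : ℝ) : (config x1 y1 a x2 y2 b).Finite :=
  ((Set.toFinite _).union (Set.finite_range _)).union (Set.finite_range _)

lemma abs_height_sub_le_two_mul_area {x1 y1 a x2 y2 b : ℝ} {p q : EuclideanSpace ℝ (Fin 2)}
    (hp : p ∈ config x1 y1 a x2 y2 b) (hq : q ∈ config x1 y1 a x2 y2 b) :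
    |p 1 - q 1| ≤ 2 * area x1 y1 a x2 y2 b := by
  have hsub := subset_convexHull ℝ (config x1 y1 a x2 y2 b)
  have hE : pt 0 0 ∈ config x1 y1 a x2 y2 b := by simp [config]
  have hF : pt 1 0 ∈ config x1 y1 a x2 y2 b := by simp [config]
  let o := (EuclideanSpace.basisFun (Fin 2) ℝ).toBasis.orientation
  have hbound := ofReal_abs_areaForm_sub_sub_le_two_mul_volume o (convex_convexHull ℝ _)
    (hsub hE) (hsub hF) (hsub hp) (hsub hq)
  rw [abs_areaForm_pt_sub_pt] at hbound
  have hvolume : volume (convexHull ℝ (config x1 y1 a x2 y2 b)) ≠ ⊤ :=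
    (isBounded_convexHull.mpr (finite_config x1 y1 a x2 y2 b).isBounded).measure_lt_top.ne
  have hfin := ENNReal.mul_ne_top (ENNReal.ofNat_ne_top (n := 2)) hvolume
  simpa [area] using (ENNReal.ofReal_le_iff_le_toReal hfin).mp hbound

end Configuration

section Triangle

lemma sqrt_three_div_six_mul_sin_sub_sin_add_two_pi_div_three (θ : ℝ) :
    √3 / 6 * (sin θ - sin (θ + 2 * π / 3)) = 1 / 2 * sin (θ - π / 6) := by
  rw [sin_sub_sin, show (θ - (θ + 2 * π / 3)) / 2 = -(π / 3) by ring,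
    show (θ + (θ + 2 * π / 3)) / 2 = θ - π / 6 + π / 2 by ring, sin_neg, sin_pi_div_three,
    cos_add_pi_div_two]
  linear_combination sin (θ - π / 6) / 6 * Real.mul_self_sqrt zero_le_three

lemma triVertex_apply_one (x y b : ℝ) (k : Fin 3) :
    triVertex x y b k 1 = y + √3 / 6 * sin (b + (k : ℕ) * (2 * π / 3)) := rfl

lemma triVertex_zero_height_sub_one (x y b : ℝ) :
    triVertex x y b 0 1 - triVertex x y b 1 1 = 1 / 2 * sin (b - π / 6) := by
  have hside := sqrt_three_div_six_mul_sin_sub_sin_add_two_pi_div_three b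
  simp only [triVertex_apply_one, Fin.val_zero, Fin.val_one, Nat.cast_zero, Nat.cast_one,
    zero_mul, one_mul, add_zero]
  linear_combination hside

lemma triVertex_two_height_sub_zero (x y b : ℝ) :
    triVertex x y b 2 1 - triVertex x y b 0 1 = -(1 / 2 * sin (b + π / 6)) := by
  have hside := sqrt_three_div_six_mul_sin_sub_sin_add_two_pi_div_three (b + 2 * (2 * π / 3))
  rw [show b + 2 * (2 * π / 3) + 2 * π / 3 = b + 2 * π by ring, sin_add_two_pi,
    show b + 2 * (2 * π / 3) - π / 6 = b + π / 6 + π by ring, sin_add_pi] at hside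
  simp only [triVertex_apply_one, Fin.val_zero, Fin.val_two, Nat.cast_zero, Nat.cast_ofNat,
    zero_mul, add_zero]
  linear_combination hside

end Triangle

theorem area_ge_triangle_height_general (x1 y1 a x2 y2 b : ℝ) :
    area x1 y1 a x2 y2 b ≥ max (1 / 4 * |sin (b - π / 6)|) (1 / 4 * |sin (b + π / 6)|) := by
  have vertex_mem (k : Fin 3) : triVertex x2 y2 b k ∈ config x1 y1 a x2 y2 b := .inr ⟨k, rfl⟩
  have side01 := abs_height_sub_le_two_mul_area (vertex_mem 0) (vertex_mem 1)
  have side20 := abs_height_sub_le_two_mul_area (vertex_mem 2) (vertex_mem 0)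
  rw [triVertex_zero_height_sub_one, abs_mul, abs_of_pos one_half_pos] at side01
  rw [triVertex_two_height_sub_zero, abs_neg, abs_mul, abs_of_pos one_half_pos] at side20
  exact max_le (by linarith) (by linarith)

theorem area_ge_triangle_height (x1 y1 a x2 y2 b : ℝ)
    (hb : Real.pi / 3 ≤ b) (hb' : b ≤ 2 * Real.pi / 3) :
    area x1 y1 a x2 y2 b ≥
      max (1 / 4 * Real.sin (b - Real.pi / 6)) (1 / 4 * Real.sin (b + Real.pi / 6)) :=
  (max_le_max (by gcongr; exact le_abs_self _) (by gcongr; exact le_abs_self _)).trans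
    (area_ge_triangle_height_general x1 y1 a x2 y2 b)
end
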